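/- arXiv:2302.01333 — 2 statements merged into one kernel-verified Lean document; each statement's English description precedes it below -/
import Mathlib

section
/- Let M be a finite episodic POMDP with horizon H, let m ≥ 1, let h ∈ {1,…,H−m}, fix an action sequence a ∈ 𝒜^{m}, and define 𝕄_{h,a} ∈ ℝ^{𝒪^{m+1}×𝒮} by [𝕄_{h,a}]_{ω,s} := ℙ_M(o_{h:h+m} = ω | s_h = s, a_{h:h+m−1} = a). Let 𝒮_h ⊆ 𝒮 be a set containing every state s for which 𝕋_{h−1}(s|s',a') > 0 for some (s',a') ∈ 𝒮×𝒜 (for h = 1: containing the support of μ₁), and suppose 𝒮_h is partitioned as 𝒮_h = ⊔_{i=1}^{n} 𝒮_h^{i} such that for all i ≠ j, s ∈ 𝒮_h^{i}, s' ∈ 𝒮_h^{j}, the supports of the columns ω ↦ [𝕄_{h,a}]_{ω,s} and ω ↦ [𝕄_{h,a}]_{ω,s'} are disjoint. If for every i the matrix 𝕄_{h,a}(𝒮_h^{i}) (the columns of 𝕄_{h,a} restricted to 𝒮_h^{i}) admits a left inverse B_i with B_i·𝕄_{h,a}(𝒮_h^{i}) = I_{𝒮_h^{i}}, then there exists B ∈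 ℝ^{𝒮×𝒪^{m+1}} with B·𝕄_{h,a}·𝕋_{h−1} = 𝕋_{h−1} and ‖B‖_{1→1} ≤ max_{1≤i≤n} ‖B_i‖_{1→1}, where ‖·‖_{1→1} denotes the operator norm max_{‖y‖₁≤1} ‖·y‖₁. -/
/-!
The `1 → 1` operator norm is the largest `ℓ¹` norm of a column. Each observation sequence `ω` lies
in the supports of columns of `𝕄_{h,a}` from at most one block, so `B` may take as its `ω`-column
the `ω`-column of that block's left inverse, extended by zero, or zero if there is no such block.
Every column of `B` is then zero or a zero-extended column of some `B_i`, which bounds the norm.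
For `s` in block `i`, the `s`-column of `B · 𝕄_{h,a}` only involves those `ω` at which `B` agrees
with `B_i`, so it is the unit vector at `s`. Hence `B · 𝕄_{h,a}` fixes every vector supported on
the union of the blocks, in particular the columns of the transition matrix.
-/

open Finset

noncomputable section

/-- A finite episodic POMDP with horizon `H`, latent state space `S`, observation space `O`,
action space `A`.  Steps are indexed by `1, …, H` (paper convention). -/
structure POMDP (S O A : Type) [Fintype S] [Fintype O] [Fintype A] (H : ℕ) where
  init : S → ℝ
  init_nonneg : ∀ s, 0 ≤ init s
  init_sum : ∑ s, init s = 1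
  trans : ℕ → S → A → S → ℝ
  trans_nonneg : ∀ h s a s', 0 ≤ trans h s a s'
  trans_sum : ∀ h s a, ∑ s', trans h s a s' = 1
  emit : ℕ → S → O → ℝ
  emit_nonneg : ∀ h s o, 0 ≤ emit h s o
  emit_sum : ∀ h s, ∑ o, emit h s o = 1
  reward : ℕ → O → A → ℝ
  reward_nonneg : ∀ h o a, 0 ≤ reward h o a
  reward_le_one : ∀ h o a, reward h o a ≤ 1
  reward_total : ∀ τ : Fin H → O × A, ∑ h : Fin H, reward (h.1 + 1) (τ h).1 (τ h).2 ≤ 1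

namespace POMDP

variable {S O A : Type} [Fintype S] [Fintype O] [Fintype A] {H : ℕ}

/-- `emitActProb M m h s ω a` is the probability `ℙ_M(o_{h:h+m−1} = ω | s_h = s,
a_{h:h+m−2} = a)` of observing the sequence `ω ∈ 𝒪^m` when the latent state at (1-based)
step `h` is `s` and the action sequence `a ∈ 𝒜^{m−1}` is executed. -/
def emitActProb (M : POMDP S O A H) : (m : ℕ) → ℕ → S → (Fin m → O) → (Fin (m - 1) → A) → ℝ
  | 0, _, _, _, _ => 1
  | 1, h, s, ω, _ => M.emit h s (ω 0)
  | m + 2, h, s, ω, a =>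
    M.emit h s (ω 0) *
      ∑ s' : S, M.trans h s (a ⟨0, Nat.succ_pos m⟩) s' *
        emitActProb M (m + 1) (h + 1) s' (fun i => ω i.succ) (fun i => a i.succ)

/-- The `m`-step emission–action matrix `𝕄_{h,m}` (`h` is the 1-based step index). -/
def emitActMatrix (M : POMDP S O A H) (h m : ℕ) :
    Matrix ((Fin m → O) × (Fin (m - 1) → A)) S ℝ :=
  Matrix.of fun p s => M.emitActProb m h s p.1 p.2

/-- The set of columns of the step-(h−1) transition matrix `𝕋_{h−1}`
(the single column `μ₁` when `h = 1`). -/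
def stepCols (M : POMDP S O A H) (h : ℕ) : Set (S → ℝ) :=
  if h = 1 then {fun s => M.init s}
  else {c | ∃ s' a', c = fun s => M.trans (h - 1) s' a' s}

/-- `B` is a generalized left inverse of `𝕄_{h,m}`, i.e. `B · 𝕄_{h,m} · 𝕋_{h−1} = 𝕋_{h−1}`. -/
def IsGenLeftInv (M : POMDP S O A H) (h m : ℕ)
    (B : Matrix S ((Fin m → O) × (Fin (m - 1) → A)) ℝ) : Prop :=
  ∀ c ∈ M.stepCols h, (B * M.emitActMatrix h m).mulVec c = c

end POMDP

/-- The star-norm `‖x‖_* = (Σ_a (Σ_ω |x(ω,a)|)²)^{1/2}`. -/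
def starNorm {ι κ : Type} [Fintype ι] [Fintype κ] (x : ι × κ → ℝ) : ℝ :=
  Real.sqrt (∑ a : κ, (∑ ω : ι, |x (ω, a)|) ^ 2)

/-- The `(*→1)`-operator norm `‖B‖_{*→1} = max_{‖x‖_* ≤ 1} ‖Bx‖₁`. -/
def opNormStarOne {S ι κ : Type} [Fintype S] [Fintype ι] [Fintype κ]
    (B : Matrix S (ι × κ) ℝ) : ℝ :=
  sSup {y | ∃ x : ι × κ → ℝ, starNorm x ≤ 1 ∧ y = ∑ s, |B.mulVec x s|}

/-- The `(1→1)`-operator norm `‖B‖_{1→1} = max_{‖y‖₁ ≤ 1} ‖By‖₁`. -/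
def opNormOneOne {ι₁ ι₂ : Type} [Fintype ι₁] [Fintype ι₂] (B : Matrix ι₁ ι₂ ℝ) : ℝ :=
  sSup {y | ∃ v : ι₂ → ℝ, (∑ i, |v i|) ≤ 1 ∧ y = ∑ j, |B.mulVec v j|}

namespace POMDP
variable {S O A : Type} [Fintype S] [Fintype O] [Fintype A] {H : ℕ}

/-- `M` is `m`-step `α`-revealing. -/
def IsRevealing (M : POMDP S O A H) (m : ℕ) (α : ℝ) : Prop :=
  ∀ h ∈ Finset.Icc 1 (H - m + 1),
    ∃ B : Matrix S ((Fin m → O) × (Fin (m - 1) → A)) ℝ,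
      M.IsGenLeftInv h m B ∧ opNormStarOne B ≤ 1 / α

end POMDP

/-- A history-dependent policy: a distribution over actions for every (history, observation). -/
structure Policy (O A : Type) [Fintype A] where
  act : List (O × A) → O → A → ℝ
  act_nonneg : ∀ τ o a, 0 ≤ act τ o a
  act_sum : ∀ τ o, ∑ a, act τ o a = 1

namespace POMDP
variable {S O A : Type} [Fintype S] [Fintype O] [Fintype A] {H : ℕ}

/-- The probability `ℙ_M^π(τ)` of a full trajectory `τ = (o_1,a_1,…,o_H,a_H)`. -/
def trajProb (M : POMDP S O A H) (π : Policy O A) (τ : Fin H → O × A) : ℝ :=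
  ∑ s : Fin H → S, ∏ h : Fin H,
    (if h.1 = 0 then M.init (s h)
     else
       M.trans h.1 (s ⟨h.1 - 1, Nat.lt_of_le_of_lt (Nat.sub_le _ _) h.2⟩)
         (τ ⟨h.1 - 1, Nat.lt_of_le_of_lt (Nat.sub_le _ _) h.2⟩).2 (s h)) *
    M.emit (h.1 + 1) (s h) (τ h).1 *
    π.act ((List.ofFn τ).take h.1) (τ h).1 (τ h).2

/-- The value `V_M(π)` of a policy. -/
def value (M : POMDP S O A H) (π : Policy O A) : ℝ :=
  ∑ τ : Fin H → O × A, M.trajProb π τ * ∑ h : Fin H, M.reward (h.1 + 1) (τ h).1 (τ h).2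

/-- The optimal value `V_M⋆`. -/
def optValue (M : POMDP S O A H) : ℝ := ⨆ π : Policy O A, M.value π

end POMDP

/-- A `T`-episode algorithm: a distribution over actions for every
(past episodes, within-episode history, current observation), and an output policy map. -/
structure Algorithm (O A : Type) [Fintype A] (H : ℕ) where
  act : List (Fin H → O × A) → List (O × A) → O → A → ℝ
  act_nonneg : ∀ past hist o a, 0 ≤ act past hist o a
  act_sum : ∀ past hist o, ∑ a, act past hist o a = 1
  out : List (Fin H → O × A) → Policy O A

/-- The policy executed by algorithm `𝔄` in the episode following the past episodes `past`. -/
def Algorithm.policyAt {O A : Type} [Fintype A] {H : ℕ} (𝔄 : Algorithm O A H)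
    (past : List (Fin H → O × A)) : Policy O A :=
  ⟨fun hist o a => 𝔄.act past hist o a, fun _ _ _ => 𝔄.act_nonneg _ _ _ _,
    fun _ _ => 𝔄.act_sum _ _ _⟩

namespace POMDP
variable {S O A : Type} [Fintype S] [Fintype O] [Fintype A] {H : ℕ}

/-- The law `ℙ_M^𝔄` of the transcript `(τ^{(1)},…,τ^{(T)})`. -/
def transcriptProb (M : POMDP S O A H) (𝔄 : Algorithm O A H) {T : ℕ}
    (τs : Fin T → Fin H → O × A) : ℝ :=
  ∏ t : Fin T, M.trajProb (𝔄.policyAt ((List.ofFn τs).take t.1)) (τs t)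

open Classical in
/-- `ℙ_M^𝔄(V_M⋆ − V_M(π^out) < ε)`. -/
def pacProb (M : POMDP S O A H) (𝔄 : Algorithm O A H) (T : ℕ) (ε : ℝ) : ℝ :=
  ∑ τs : Fin T → Fin H → O × A,
    if M.optValue - M.value (𝔄.out (List.ofFn τs)) < ε then M.transcriptProb 𝔄 τs else 0

/-- The expected regret `E_M^𝔄[Σ_{t=1}^T (V_M⋆ − V_M(π^{(t)}))]`. -/
def expRegret (M : POMDP S O A H) (𝔄 : Algorithm O A H) (T : ℕ) : ℝ :=
  ∑ τs : Fin T → Fin H → O × A,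
    M.transcriptProb 𝔄 τs *
      ∑ t : Fin T, (M.optValue - M.value (𝔄.policyAt ((List.ofFn τs).take t.1)))

end POMDP

open scoped Function

theorem mulVec_congr_of_col_eq {m n R : Type*} [Fintype n] [NonUnitalNonAssocSemiring R]
    {C D : Matrix m n R} {v : n → R} (h : ∀ j, v j ≠ 0 → C.col j = D.col j) :
    C.mulVec v = D.mulVec v := by
  funext i
  simp only [Matrix.mulVec, dotProduct]
  refine Finset.sum_congr rfl fun j _ => ?_
  by_cases hj : v j = 0
  · simp only [hj, mul_zero]
  · rw [← Matrix.col_apply C, h j hj, Matrix.col_apply]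

section OpNorm

variable {ι κ : Type} [Fintype ι] [Fintype κ]

theorem sum_abs_mulVec_le (B : Matrix ι κ ℝ) (v : κ → ℝ) :
    ∑ i, |B.mulVec v i| ≤ (⨆ k, ∑ i, |B i k|) * ∑ k, |v k| :=
  calc ∑ i, |B.mulVec v i| ≤ ∑ i, ∑ k, |B i k| * |v k| := by
        refine Finset.sum_le_sum fun i _ => ?_
        simp only [Matrix.mulVec, dotProduct, ← abs_mul]
        exact Finset.abs_sum_le_sum_abs _ _
    _ = ∑ k, (∑ i, |B i k|) * |v k| := by
        rw [Finset.sum_comm]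
        simp only [Finset.sum_mul]
    _ ≤ ∑ k, (⨆ k, ∑ i, |B i k|) * |v k| := by
        gcongr with k
        exact Finite.le_ciSup (fun k => ∑ i, |B i k|) k
    _ = (⨆ k, ∑ i, |B i k|) * ∑ k, |v k| := (Finset.mul_sum ..).symm

theorem opNormOneOne_eq_iSup_sum_abs (B : Matrix ι κ ℝ) :
    opNormOneOne B = ⨆ k, ∑ i, |B i k| := by
  classical
  have hnonneg : 0 ≤ ⨆ k, ∑ i, |B i k| := Real.iSup_nonneg fun _ => by positivity
  have hle : ∀ y ∈ {y | ∃ v : κ → ℝ, ∑ k, |v k| ≤ 1 ∧ y = ∑ i, |B.mulVec v i|},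
      y ≤ ⨆ k, ∑ i, |B i k| := by
    rintro _ ⟨v, hv, rfl⟩
    exact (sum_abs_mulVec_le B v).trans (mul_le_of_le_one_right hnonneg hv)
  have hmem : ∀ k, ∑ i, |B i k| ∈
      {y | ∃ v : κ → ℝ, ∑ k, |v k| ≤ 1 ∧ y = ∑ i, |B.mulVec v i|} := fun k =>
    ⟨Pi.single k 1, by simp [Pi.single_apply, apply_ite abs], by simp⟩
  refine le_antisymm (Real.sSup_le hle hnonneg) (Real.iSup_le (fun k => ?_) ?_)
  · exact le_csSup ⟨_, hle⟩ (hmem k)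
  · exact Real.sSup_nonneg fun y ⟨v, _, hy⟩ => hy ▸ by positivity

theorem opNormOneOne_nonneg (B : Matrix ι κ ℝ) : 0 ≤ opNormOneOne B := by
  rw [opNormOneOne_eq_iSup_sum_abs]
  exact Real.iSup_nonneg fun _ => by positivity

theorem sum_abs_le_opNormOneOne (B : Matrix ι κ ℝ) (k : κ) :
    ∑ i, |B i k| ≤ opNormOneOne B := by
  rw [opNormOneOne_eq_iSup_sum_abs]
  exact Finite.le_ciSup (fun k => ∑ i, |B i k|) k

end OpNorm

section ExtendRows

/-- Extension by zero of a matrix along `e : T → S` on row indices: the row at `e t` is the row of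
`B` at `t`, and rows outside the range of `e` vanish. It turns a left inverse on one block into a
matrix with rows indexed by all states. If `e` is not injective, each row is taken from some
preimage, as in `Function.extend`. -/
def extendRows {T S Ω R : Type*} [Zero R] (e : T → S) (B : Matrix T Ω R) : Matrix S Ω R :=
  Matrix.of fun s ω => Function.extend e (fun t => B t ω) 0 s

section Apply

variable {T S Ω R : Type*} [Zero R] {e : T → S}

theorem extendRows_apply (he : Function.Injective e) (B : Matrix T Ω R) (t : T) (ω : Ω) :
    extendRows e B (e t) ω = B t ω := by
  rw [extendRows, Matrix.of_apply, he.extend_apply]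

theorem extendRows_apply_of_notMem_range (B : Matrix T Ω R) {s : S} (hs : s ∉ Set.range e)
    (ω : Ω) : extendRows e B s ω = 0 := by
  rw [extendRows, Matrix.of_apply, Function.extend_apply' _ _ _ hs, Pi.zero_apply]

end Apply

theorem opNormOneOne_extendRows {T S Ω : Type} [Fintype T] [Fintype S] [Fintype Ω] {e : T → S}
    (he : Function.Injective e) (B : Matrix T Ω ℝ) :
    opNormOneOne (extendRows e B) = opNormOneOne B := by
  simp only [opNormOneOne_eq_iSup_sum_abs]
  refine iSup_congr fun ω => (Fintype.sum_of_injective e he _ _ (fun s hs => ?_) fun t => ?_).symm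
  · rw [extendRows_apply_of_notMem_range B hs, abs_zero]
  · rw [extendRows_apply he]

section Mul

variable {T S Ω X R : Type*}

theorem extendRows_mul [Fintype Ω] [NonUnitalNonAssocSemiring R] (e : T → S) (B : Matrix T Ω R)
    (P : Matrix Ω X R) : extendRows e B * P = extendRows e (B * P) := by
  classical
  ext s x
  simp only [extendRows, Matrix.mul_apply, Matrix.of_apply, Function.extend_def]
  split_ifs <;> simp

theorem extendRows_one [DecidableEq T] [DecidableEq S] [Zero R] [One R] {e : T → S}
    (he : Function.Injective e) :
    extendRows e (1 : Matrix T T R) = (1 : Matrix S S R).submatrix id e := by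
  ext s t
  by_cases hs : s ∈ Set.range e
  · obtain ⟨t', rfl⟩ := hs
    simp [extendRows_apply he, Matrix.one_apply, he.eq_iff]
  · have hne : s ≠ e t := fun h => hs ⟨t, h.symm⟩
    simp [extendRows_apply_of_notMem_range _ hs, hne]

theorem extendRows_mul_col_of_leftInverse [Fintype Ω] [DecidableEq T] [DecidableEq S]
    [NonAssocSemiring R] {e : T → S} (he : Function.Injective e) {B : Matrix T Ω R}
    {P : Matrix Ω S R} (hB : B * P.submatrix id e = 1) (t : T) :
    (extendRows e B * P).col (e t) = (1 : Matrix S S R).col (e t) := by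
  have hsub : (extendRows e B * P).submatrix id e = (1 : Matrix S S R).submatrix id e :=
    calc (extendRows e B * P).submatrix id e = extendRows e B * P.submatrix id e := rfl
      _ = (1 : Matrix S S R).submatrix id e := by rw [extendRows_mul, hB, extendRows_one he]
  exact congrFun (congrArg Matrix.col hsub) t

end Mul

end ExtendRows

section GlueColumns

/-- The matrix glued from matrices `A i` along sets `U i` of column indices: for pairwise disjoint
`U i`, its column at `ω ∈ U i` is that of `A i`, and its columns outside every `U i` vanish. -/
def glueColumns {ι S Ω R : Type*} [Fintype ι] [AddCommMonoid R] (U : ι → Set Ω)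
    (A : ι → Matrix S Ω R) : Matrix S Ω R :=
  Matrix.of fun s ω => ∑ i, (U i).indicator (A i s) ω

section Algebra

variable {ι S Ω X R : Type*} [Fintype ι] {U : ι → Set Ω}

theorem glueColumns_apply_of_mem [AddCommMonoid R] (hU : Pairwise (Disjoint on U))
    (A : ι → Matrix S Ω R) {i : ι} {ω : Ω} (hω : ω ∈ U i) (s : S) :
    glueColumns U A s ω = A i s ω := by
  have hother : ∀ j, j ≠ i → (U j).indicator (A j s) ω = 0 := fun j hj =>
    Set.indicator_of_notMem ((hU hj).notMem_of_mem_right hω) _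
  rw [glueColumns, Matrix.of_apply, Fintype.sum_eq_single i hother, Set.indicator_of_mem hω]

theorem glueColumns_apply_of_forall_notMem [AddCommMonoid R] (A : ι → Matrix S Ω R) {ω : Ω}
    (hω : ∀ i, ω ∉ U i) (s : S) : glueColumns U A s ω = 0 :=
  Finset.sum_eq_zero fun i _ => Set.indicator_of_notMem (hω i) _

theorem glueColumns_mul_col [Fintype Ω] [NonUnitalNonAssocSemiring R]
    (hU : Pairwise (Disjoint on U)) (A : ι → Matrix S Ω R) {P : Matrix Ω X R} {i : ι}
    {x : X} (hP : Function.support (P.col x) ⊆ U i) :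
    (glueColumns U A * P).col x = (A i * P).col x := by
  funext s
  simp only [Matrix.col_apply, Matrix.mul_apply]
  refine Finset.sum_congr rfl fun ω _ => ?_
  by_cases hω : P ω x = 0
  · simp only [hω, mul_zero]
  · rw [glueColumns_apply_of_mem hU A (hP hω)]

end Algebra

theorem opNormOneOne_glueColumns_le {ι : Type*} [Fintype ι] {S Ω : Type} [Fintype S] [Fintype Ω]
    {U : ι → Set Ω} (hU : Pairwise (Disjoint on U)) (A : ι → Matrix S Ω ℝ) :
    opNormOneOne (glueColumns U A) ≤ ⨆ i, opNormOneOne (A i) := by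
  have hnonneg : 0 ≤ ⨆ i, opNormOneOne (A i) := Real.iSup_nonneg fun i => opNormOneOne_nonneg _
  rw [opNormOneOne_eq_iSup_sum_abs]
  refine Real.iSup_le (fun ω => ?_) hnonneg
  by_cases hω : ∃ i, ω ∈ U i
  · obtain ⟨i, hi⟩ := hω
    calc ∑ s, |glueColumns U A s ω| = ∑ s, |A i s ω| := by
          simp only [glueColumns_apply_of_mem hU A hi]
      _ ≤ opNormOneOne (A i) := sum_abs_le_opNormOneOne _ _
      _ ≤ ⨆ i, opNormOneOne (A i) :=
          Finite.le_ciSup (fun i => opNormOneOne (A i)) i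
  · have hzero := glueColumns_apply_of_forall_notMem A (not_exists.1 hω)
    simpa only [hzero, abs_zero, Finset.sum_const_zero] using hnonneg

end GlueColumns

section BlockSupport

variable {S Ω R : Type*} [Zero R]

/-- The row indices at which some column of `P` in the block `t` is nonzero, i.e. the union of the
supports of these columns. These sets say which block's left inverse to use at a given
observation sequence. -/
def blockSupport (P : Matrix Ω S R) (t : Finset S) : Set Ω :=
  ⋃ s ∈ t, Function.support (P.col s)

theorem support_col_subset_blockSupport (P : Matrix Ω S R) {t : Finset S} {s : S} (hs : s ∈ t) :
    Function.support (P.col s) ⊆ blockSupport P t :=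
  Set.subset_biUnion_of_mem (u := fun s => Function.support (P.col s)) hs

theorem disjoint_blockSupport {P : Matrix Ω S R} {t t' : Finset S}
    (h : ∀ s ∈ t, ∀ s' ∈ t', ∀ ω, P ω s = 0 ∨ P ω s' = 0) :
    Disjoint (blockSupport P t) (blockSupport P t') := by
  simp only [blockSupport, Set.disjoint_iUnion_left, Set.disjoint_iUnion_right]
  exact fun s' hs' s hs => Set.disjoint_left.2 fun ω hω hω' => (h s hs s' hs' ω).elim hω hω'

end BlockSupport

theorem genLeftInv_of_block_structure_general {ι : Type*} [Finite ι] {S Ω : Type} [Fintype S]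
    [Fintype Ω] (P : Matrix Ω S ℝ) (parts : ι → Finset S) [∀ i, DecidableEq (parts i)]
    (hsupp : ∀ i j, i ≠ j → ∀ s ∈ parts i, ∀ s' ∈ parts j, ∀ ω, P ω s = 0 ∨ P ω s' = 0)
    (Binv : (i : ι) → Matrix (parts i) Ω ℝ)
    (hBinv : ∀ i, Binv i * P.submatrix id ((↑) : parts i → S) = 1) :
    ∃ B : Matrix S Ω ℝ,
      (∀ c : S → ℝ, (∀ s, c s ≠ 0 → ∃ i, s ∈ parts i) → (B * P).mulVec c = c) ∧
      opNormOneOne B ≤ ⨆ i, opNormOneOne (Binv i) := by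
  classical
  cases nonempty_fintype ι
  let U : ι → Set Ω := fun i => blockSupport P (parts i)
  let A : ι → Matrix S Ω ℝ := fun i => extendRows (↑) (Binv i)
  have hU : Pairwise (Disjoint on U) := fun i j hij => disjoint_blockSupport (hsupp i j hij)
  have hcol : ∀ i, ∀ s ∈ parts i, (glueColumns U A * P).col s = (1 : Matrix S S ℝ).col s :=
    fun i s hs =>
      (glueColumns_mul_col hU A (support_col_subset_blockSupport P hs)).trans
        (extendRows_mul_col_of_leftInverse Subtype.val_injective (hBinv i) ⟨s, hs⟩)
  refine ⟨glueColumns U A, fun c hc => ?_, ?_⟩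
  · have hfix : (glueColumns U A * P).mulVec c = (1 : Matrix S S ℝ).mulVec c :=
      mulVec_congr_of_col_eq fun s hs => (hc s hs).elim fun i hi => hcol i s hi
    rw [hfix, Matrix.one_mulVec]
  · calc opNormOneOne (glueColumns U A) ≤ ⨆ i, opNormOneOne (A i) :=
          opNormOneOne_glueColumns_le hU A
      _ = ⨆ i, opNormOneOne (Binv i) :=
          iSup_congr fun i => opNormOneOne_extendRows Subtype.val_injective (Binv i)

open Classical in
/-- **Lemma E.2 (block-diagonal construction of left inverses).**
Fix an action sequence `a ∈ 𝒜^m` and write `𝕄_{h,a} ∈ ℝ^{𝒪^{m+1}×𝒮}` for the matrix of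
observation-sequence probabilities.  Suppose `𝒮_h` contains every state reachable at step
`h` (i.e. the supports of all columns of `𝕋_{h−1}`), and `𝒮_h` is partitioned into blocks
`parts i` whose columns of `𝕄_{h,a}` have pairwise disjoint supports across blocks.  If
each restricted block admits a left inverse `Binv i`, then there is a matrix `B` with
`B·𝕄_{h,a}·𝕋_{h−1} = 𝕋_{h−1}` and `‖B‖_{1→1} ≤ max_i ‖Binv i‖_{1→1}`. -/
theorem genLeftInv_of_block_structure {S O A : Type} [Fintype S] [Fintype O] [Fintype A]
    {H : ℕ} (M : POMDP S O A H) (m h n : ℕ) (hm : 1 ≤ m)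
    (hh : h ∈ Finset.Icc 1 (H - m)) (a : Fin m → A)
    (Sh : Finset S)
    (hcover : ∀ c ∈ M.stepCols h, ∀ s : S, c s ≠ 0 → s ∈ Sh)
    (parts : Fin n → Finset S)
    (hpart_cover : ∀ s : S, s ∈ Sh ↔ ∃ i, s ∈ parts i)
    (hpart_disj : ∀ i j, i ≠ j → Disjoint (parts i) (parts j))
    (hsupp : ∀ i j, i ≠ j → ∀ s ∈ parts i, ∀ s' ∈ parts j, ∀ ω : Fin (m + 1) → O,
      M.emitActProb (m + 1) h s ω a = 0 ∨ M.emitActProb (m + 1) h s' ω a = 0)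
    (Binv : (i : Fin n) → Matrix (parts i) (Fin (m + 1) → O) ℝ)
    (hBinv : ∀ i,
      Binv i *
          Matrix.of (fun (ω : Fin (m + 1) → O) (s : parts i) =>
            M.emitActProb (m + 1) h s.1 ω a) =
        1) :
    ∃ B : Matrix S (Fin (m + 1) → O) ℝ,
      (∀ c ∈ M.stepCols h,
        (B * Matrix.of fun (ω : Fin (m + 1) → O) s =>
            M.emitActProb (m + 1) h s ω a).mulVec c = c) ∧
      opNormOneOne B ≤ ⨆ i, opNormOneOne (Binv i) := by
  obtain ⟨B, hB, hnorm⟩ := genLeftInv_of_block_structure_general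
    (Matrix.of fun ω s => M.emitActProb (m + 1) h s ω a) parts hsupp Binv hBinv
  exact ⟨B, fun c hc => hB c fun s hs => (hpart_cover s).1 (hcover c hc s hs), hnorm⟩
end
end

section
/- For every ε ∈ (0, 0.1], every real σ ∈ (0, 1/(2H)], and all integers n ≥ 1, K ≥ 1, A ≥ 3, and H ≥ 4n, there exists a finite family ℳ of finite episodic POMDPs with horizon H such that: (1) every M ∈ ℳ has |𝒮| = 2ⁿ + 1 latent states, |𝒪| = 2ⁿ + 2K + 1 observations, and |𝒜| = A actions; (2) every M ∈ ℳ is single-step (m = 1) α-revealing with α = σ/(σ + 2); (3) |ℳ| ≤ 2^K · A^H · (2ⁿ+1) · A · H; and (4) for every T ∈ ℕ and every T-episode algorithm 𝔄 whose output satisfies ℙ_M^𝔄( V_M⋆ − V_M(π^out) < ε/8 ) ≥ 3/4 for every M ∈ ℳ, one must have T ≥ (1/20000) · min{ 2^{n−1}·K^{1/2}·A·H/(σ²ε²), 2^{n−1}·A^{H/2}·H/ε² }. -/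
open Finset

noncomputable section

/-!
The hard models are combination locks behind a binary tree. The `2 ^ n - 1` tree states are fully
observed and move deterministically; leaving the tree leads to the absorbing state `minus`, except
that one secret arm (step, leaf, action) leads to `plus` with probability `ε`. The state stays at
`plus` only while a secret password is played. Before the last step `minus` emits one of `2 * K`
symbols uniformly, and `plus` emits them with a tilt of size `σ` in the direction of hidden signs
`μ ∈ {±1}^K`; at the last step the tilt is total and public, and the reward is `1` or `0`
according to the public sign. The tilt makes the emission matrices injective, with an explicit
left inverse of norm at most `(σ + 2) / σ`.

The lower bound compares every model with the reference law in which the secret arm leads to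
`minus`. For two sign vectors and the same lock, the mixed second moment of the likelihood ratios
of one episode exceeds `1` by at most `O(ε²)` times the sum of `σ² |corr μ μ'|` times the expected
time spent at `plus` before the last step and the probability of being there at the last step.
Averaged over the signs, `corr` has size `1 / √K`, so the mixture over `μ` stays close to the
reference in chi-square as long as a total information budget is not exceeded. The algorithm is
adaptive, so its expenditure is random; episodes that would exceed the budget are dropped from the
likelihood ratios, and the probability of overspending is bounded by Markov's inequality under the
reference law.

Under the reference law the algorithm learns nothing about the secret. An episode pulls at most
one arm, and each further password letter is right for a fraction `1 / A` of the passwords, so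
summed over all arms and averaged over passwords the occupation of `plus` is at most `3 / 2`
before the last step and about `A ^ (-H / 2)` at the last step. The same count bounds how often
the output policy is `ε / 8`-optimal, since such a policy must reach `plus` at the last step.
Dividing by the number of arms, which is at least `2 ^ (n - 1) * A * H / 6`, gives the claim.
-/

namespace HardFamily

/-! ### Sequentially generated lists -/

section Mean

variable {ι κ : Type*} [Fintype ι]

/-- The expectation `∑ i, w i * f i` of `f` under a weight `w`, usually a probability vector. -/
def mean (w f : ι → ℝ) : ℝ := ∑ i, w i * f i

lemma mean_add (w f g : ι → ℝ) : mean w (fun i => f i + g i) = mean w f + mean w g := by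
  simp only [mean, mul_add, Finset.sum_add_distrib]

lemma mean_sub (w f g : ι → ℝ) : mean w (fun i => f i - g i) = mean w f - mean w g := by
  simp only [mean, mul_sub, Finset.sum_sub_distrib]

lemma mean_const_mul (w : ι → ℝ) (c : ℝ) (f : ι → ℝ) :
    mean w (fun i => c * f i) = c * mean w f := by
  simp only [mean, Finset.mul_sum, mul_left_comm]

lemma mean_mul_const (w f : ι → ℝ) (c : ℝ) : mean w (fun i => f i * c) = mean w f * c := by
  simp only [mean, Finset.sum_mul, mul_assoc]

lemma mean_const {w : ι → ℝ} (hw : ∑ i, w i = 1) (c : ℝ) : mean w (fun _ => c) = c := by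
  rw [mean, ← Finset.sum_mul, hw, one_mul]

lemma mean_sum (w : ι → ℝ) (s : Finset κ) (f : κ → ι → ℝ) :
    mean w (fun i => ∑ k ∈ s, f k i) = ∑ k ∈ s, mean w (f k) := by
  simp only [mean, Finset.mul_sum]
  exact Finset.sum_comm

lemma mean_congr {w f g : ι → ℝ} (h : ∀ i, w i ≠ 0 → f i = g i) : mean w f = mean w g := by
  refine Finset.sum_congr rfl fun i _ => ?_
  by_cases hi : w i = 0
  · simp only [hi, zero_mul]
  · rw [h i hi]

lemma mean_mono {w f g : ι → ℝ} (hw : ∀ i, 0 ≤ w i) (h : ∀ i, f i ≤ g i) :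
    mean w f ≤ mean w g :=
  Finset.sum_le_sum fun i _ => mul_le_mul_of_nonneg_left (h i) (hw i)

lemma mean_nonneg {w f : ι → ℝ} (hw : ∀ i, 0 ≤ w i) (hf : ∀ i, 0 ≤ f i) : 0 ≤ mean w f :=
  Finset.sum_nonneg fun i _ => mul_nonneg (hw i) (hf i)

/-- The chi-square comparison of the law with density `D` with the law `w`, via
`z F ≤ 2 z² + F² / 8` at `z = D - 1`. -/
lemma mean_mul_le_of_mean_sq_le {w D F : ι → ℝ} {χ : ℝ} (hw : ∀ i, 0 ≤ w i)
    (hw1 : ∑ i, w i = 1) (hD : mean w D = 1) (hD2 : mean w (fun i => D i ^ 2) ≤ 1 + χ)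
    (hF0 : ∀ i, 0 ≤ F i) (hF1 : ∀ i, F i ≤ 1) :
    mean w (fun i => D i * F i) ≤ mean w F + 1 / 8 + 2 * χ := by
  have pointwise : ∀ i, D i * F i ≤ F i + 1 / 8 + 2 * (D i ^ 2 - 2 * D i + 1) := fun i => by
    nlinarith [sq_nonneg (4 * (D i - 1) - F i), hF0 i, hF1 i]
  calc mean w (fun i => D i * F i)
      ≤ mean w (fun i => F i + 1 / 8 + 2 * (D i ^ 2 - 2 * D i + 1)) := mean_mono hw pointwise
    _ = mean w F + 1 / 8 + 2 * (mean w (fun i => D i ^ 2) - 1) := by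
        rw [mean_add, mean_add, mean_const hw1, mean_const_mul, mean_add, mean_sub,
          mean_const_mul, mean_const hw1, hD]
        ring
    _ ≤ mean w F + 1 / 8 + 2 * χ := by linarith

end Mean

section PrefixFold

variable {X β : Type*}

/-- A quantity updated along a list, where each update may depend on the whole prefix already
read. -/
def prefixFold (b : β) (step : List X → β → X → β) (l : List X) : β :=
  l.reverseRecOn b fun l x c => step l c x

@[simp]
lemma prefixFold_nil (b : β) (step : List X → β → X → β) : prefixFold b step [] = b := by
  simp only [prefixFold, List.reverseRecOn_nil]

@[simp]
lemma prefixFold_append_singleton (b : β) (step : List X → β → X → β) (l : List X) (x : X) :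
    prefixFold b step (l ++ [x]) = step l (prefixFold b step l) x := by
  simp only [prefixFold, List.reverseRecOn_concat]

lemma ofFn_snoc {N : ℕ} (τ : Fin N → X) (x : X) :
    List.ofFn (Fin.snoc (α := fun _ => X) τ x) = List.ofFn τ ++ [x] := by
  rw [List.ofFn_succ']
  simp

lemma prod_take_snoc (f : List X → X → ℝ) {N : ℕ} (τ : Fin N → X) (x : X) :
    ∏ h : Fin (N + 1), f ((List.ofFn (Fin.snoc (α := fun _ => X) τ x)).take h.1)
        (Fin.snoc (α := fun _ => X) τ x h) =
      (∏ h : Fin N, f ((List.ofFn τ).take h.1) (τ h)) * f (List.ofFn τ) x := by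
  rw [Fin.prod_univ_castSucc, ofFn_snoc]
  congr 1
  · refine Finset.prod_congr rfl fun i _ => ?_
    rw [List.take_append_of_le_length (by simp [i.2.le])]
    simp
  · simp

lemma prefixFold_mul_ofFn (f : List X → X → ℝ) {N : ℕ} (τ : Fin N → X) :
    prefixFold 1 (fun l c x => c * f l x) (List.ofFn τ) =
      ∏ h : Fin N, f ((List.ofFn τ).take h.1) (τ h) := by
  induction N with
  | zero => simp
  | succ N ih =>
    rw [← Fin.snoc_init_self τ, prod_take_snoc, ofFn_snoc, prefixFold_append_singleton, ih]

end PrefixFold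

/-- The law of a random list whose next symbol is drawn from `prob l` given the list `l` of all
previous symbols.  Episodes and transcripts are both of this form. -/
structure SeqLaw (X : Type*) [Fintype X] where
  prob : List X → X → ℝ
  prob_nonneg : ∀ l x, 0 ≤ prob l x
  sum_prob : ∀ l, ∑ x, prob l x = 1

namespace SeqLaw

variable {X : Type*} [Fintype X] (P : SeqLaw X)

/-- The probability that the first `N` symbols are `τ`. -/
def pathProb (N : ℕ) (τ : Fin N → X) : ℝ :=
  ∏ h : Fin N, P.prob ((List.ofFn τ).take h.1) (τ h)

lemma pathProb_nonneg {N : ℕ} (τ : Fin N → X) : 0 ≤ P.pathProb N τ :=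
  Finset.prod_nonneg fun _ _ => P.prob_nonneg _ _

lemma pathProb_snoc {N : ℕ} (τ : Fin N → X) (x : X) :
    P.pathProb (N + 1) (Fin.snoc (α := fun _ => X) τ x) =
      P.pathProb N τ * P.prob (List.ofFn τ) x :=
  prod_take_snoc P.prob τ x

lemma mean_pathProb_zero (Z : List X → ℝ) :
    mean (P.pathProb 0) (fun τ => Z (List.ofFn τ)) = Z [] := by
  simp [mean, pathProb]

lemma mean_pathProb_succ (N : ℕ) (Z : List X → ℝ) :
    mean (P.pathProb (N + 1)) (fun τ => Z (List.ofFn τ)) =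
      mean (P.pathProb N) fun τ =>
        mean (P.prob (List.ofFn τ)) fun x => Z (List.ofFn τ ++ [x]) := by
  unfold mean
  rw [← (Fin.snocEquiv (fun _ : Fin (N + 1) => X)).sum_comp, Fintype.sum_prod_type,
    Finset.sum_comm]
  refine Finset.sum_congr rfl fun τ _ => ?_
  rw [Finset.mul_sum]
  refine Finset.sum_congr rfl fun x _ => ?_
  simp only [Fin.snocEquiv, Equiv.coe_fn_mk]
  rw [pathProb_snoc, ofFn_snoc, mul_assoc]

lemma mean_pathProb_le {N : ℕ} {Z : List X → ℝ}
    (hZ : ∀ l, l.length < N → mean (P.prob l) (fun x => Z (l ++ [x])) ≤ Z l) :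
    mean (P.pathProb N) (fun τ => Z (List.ofFn τ)) ≤ Z [] := by
  induction N with
  | zero => exact (P.mean_pathProb_zero Z).le
  | succ N ih =>
    rw [mean_pathProb_succ]
    exact (mean_mono P.pathProb_nonneg fun τ => hZ _ (by simp)).trans
      (ih fun l hl => hZ l (by omega))

lemma mean_pathProb_eq {N : ℕ} {Z : List X → ℝ}
    (hZ : ∀ l, l.length < N → mean (P.prob l) (fun x => Z (l ++ [x])) = Z l) :
    mean (P.pathProb N) (fun τ => Z (List.ofFn τ)) = Z [] := by
  induction N with
  | zero => exact P.mean_pathProb_zero Z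
  | succ N ih =>
    rw [mean_pathProb_succ, ← ih fun l hl => hZ l (by omega)]
    exact mean_congr fun τ _ => hZ _ (by simp)

lemma sum_pathProb (N : ℕ) : ∑ τ, P.pathProb N τ = 1 := by
  simpa [mean] using P.mean_pathProb_eq (N := N) (Z := fun _ => 1)
    fun l _ => mean_const (P.sum_prob l) 1

lemma induction_of_pathProb_ne_zero {Q : List X → Prop} (nil : Q [])
    (append : ∀ l x, Q l → P.prob l x ≠ 0 → Q (l ++ [x])) {N : ℕ} {τ : Fin N → X}
    (hτ : P.pathProb N τ ≠ 0) : Q (List.ofFn τ) := by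
  induction N with
  | zero => simpa using nil
  | succ N ih =>
    rw [← Fin.snoc_init_self τ] at hτ ⊢
    rw [pathProb_snoc] at hτ
    rw [ofFn_snoc]
    exact append _ _ (ih (left_ne_zero_of_mul hτ)) (right_ne_zero_of_mul hτ)

/-- The law obtained from `P` by the one-step likelihood ratios `L`. -/
def tilt (L : List X → X → ℝ) (hL : ∀ l x, 0 ≤ L l x) (hL1 : ∀ l, mean (P.prob l) (L l) = 1) :
    SeqLaw X where
  prob l x := P.prob l x * L l x
  prob_nonneg l x := mul_nonneg (P.prob_nonneg l x) (hL l x)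
  sum_prob := hL1

end SeqLaw

/-! ### A change of measure with a predictable information budget -/

section ChangeOfMeasure

variable {X Ω : Type*}

/-- The total cost of a list when reading the symbol after the prefix `l` costs `u l`. -/
def total (u : List X → ℝ) : List X → ℝ := prefixFold 0 fun l c _ => c + u l

/-- The cost actually charged under a budget of `1`: a step that would exceed it is skipped. -/
def spent (u : List X → ℝ) : List X → ℝ :=
  prefixFold 0 fun l c _ => if c + u l ≤ 1 then c + u l else c

/-- The truncated likelihood ratio: the factors of skipped steps are replaced by `1`. -/
def truncLR (u : List X → ℝ) (L : List X → X → ℝ) : List X → ℝ :=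
  prefixFold 1 fun l c x => c * if spent u l + u l ≤ 1 then L l x else 1

lemma total_append_singleton (u : List X → ℝ) (l : List X) (x : X) :
    total u (l ++ [x]) = total u l + u l :=
  prefixFold_append_singleton _ _ _ _

lemma spent_append_singleton (u : List X → ℝ) (l : List X) (x : X) :
    spent u (l ++ [x]) = if spent u l + u l ≤ 1 then spent u l + u l else spent u l :=
  prefixFold_append_singleton _ _ _ _

lemma truncLR_append_singleton (u : List X → ℝ) (L : List X → X → ℝ) (l : List X) (x : X) :
    truncLR u L (l ++ [x]) = truncLR u L l * if spent u l + u l ≤ 1 then L l x else 1 :=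
  prefixFold_append_singleton _ _ _ _

lemma total_nonneg {u : List X → ℝ} (hu : ∀ l, 0 ≤ u l) (l : List X) : 0 ≤ total u l := by
  induction l using List.reverseRecOn with
  | nil => simp [total]
  | append_singleton l x ih => rw [total_append_singleton]; linarith [hu l]

lemma spent_le_one (u : List X → ℝ) (l : List X) : spent u l ≤ 1 := by
  induction l using List.reverseRecOn with
  | nil => simp [spent]
  | append_singleton l x ih => rw [spent_append_singleton]; split_ifs with h <;> assumption

lemma spent_eq_total {u : List X → ℝ} (hu : ∀ l, 0 ≤ u l) {l : List X} (hl : total u l ≤ 1) :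
    spent u l = total u l := by
  induction l using List.reverseRecOn with
  | nil => simp [spent, total]
  | append_singleton l x ih =>
    rw [total_append_singleton] at hl ⊢
    have prefix_eq := ih (by linarith [hu l])
    rw [spent_append_singleton, prefix_eq, if_pos hl]

lemma truncLR_nonneg (u : List X → ℝ) {L : List X → X → ℝ} (hL : ∀ l x, 0 ≤ L l x)
    (l : List X) : 0 ≤ truncLR u L l := by
  induction l using List.reverseRecOn with
  | nil => simp [truncLR]
  | append_singleton l x ih =>
    rw [truncLR_append_singleton]
    split_ifs
    · exact mul_nonneg ih (hL l x)
    · simpa using ih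

namespace SeqLaw

variable [Fintype X] [Fintype Ω] (P : SeqLaw X)

lemma pathProb_tilt_of_total_le {u : List X → ℝ} (hu : ∀ l, 0 ≤ u l) {L : List X → X → ℝ}
    (hL : ∀ l x, 0 ≤ L l x) (hL1 : ∀ l, mean (P.prob l) (L l) = 1) {N : ℕ} {τ : Fin N → X}
    (hτ : total u (List.ofFn τ) ≤ 1) :
    (P.tilt L hL hL1).pathProb N τ = P.pathProb N τ * truncLR u L (List.ofFn τ) := by
  induction N with
  | zero => simp [pathProb, truncLR]
  | succ N ih =>
    obtain ⟨ρ, x, rfl⟩ : ∃ (ρ : Fin N → X) (x : X), τ = Fin.snoc (α := fun _ => X) ρ x :=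
      ⟨Fin.init τ, τ (Fin.last N), (Fin.snoc_init_self τ).symm⟩
    rw [ofFn_snoc, total_append_singleton] at hτ
    have prefix_le : total u (List.ofFn ρ) ≤ 1 := by linarith [hu (List.ofFn ρ)]
    rw [pathProb_snoc, pathProb_snoc, ofFn_snoc, truncLR_append_singleton,
      spent_eq_total hu prefix_le, if_pos hτ, ih prefix_le]
    simp only [tilt]
    ring

lemma mean_truncLR (u : List X → ℝ) {L : List X → X → ℝ}
    (hL1 : ∀ l, mean (P.prob l) (L l) = 1) (T : ℕ) :
    mean (P.pathProb T) (fun τ => truncLR u L (List.ofFn τ)) = 1 := by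
  have martingale : ∀ l, mean (P.prob l) (fun x => truncLR u L (l ++ [x])) = truncLR u L l := by
    intro l
    simp only [truncLR_append_singleton]
    split_ifs
    · rw [mean_const_mul, hL1, mul_one]
    · rw [mean_const (P.sum_prob l), mul_one]
  rw [P.mean_pathProb_eq fun l _ => martingale l]
  simp [truncLR]

lemma mean_truncLR_mul_le (u : List X → ℝ) {L L' : List X → X → ℝ} (hL : ∀ l x, 0 ≤ L l x)
    (hL' : ∀ l x, 0 ≤ L' l x) {C : ℝ} (hC : 0 ≤ C)
    (hLL' : ∀ l, mean (P.prob l) (fun x => L l x * L' l x) ≤ Real.exp (u l * C)) (T : ℕ) :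
    mean (P.pathProb T)
      (fun τ => truncLR u L (List.ofFn τ) * truncLR u L' (List.ofFn τ)) ≤ Real.exp C := by
  set Q : List X → ℝ := fun l => truncLR u L l * truncLR u L' l
  have Q_nonneg : ∀ l, 0 ≤ Q l := fun l =>
    mul_nonneg (truncLR_nonneg u hL l) (truncLR_nonneg u hL' l)
  -- the unspent budget compensates for the growth of the product
  set Z : List X → ℝ := fun l => Q l * Real.exp (C * (1 - spent u l))
  have supermartingale : ∀ l, mean (P.prob l) (fun x => Z (l ++ [x])) ≤ Z l := by
    intro l
    simp only [Z, Q, truncLR_append_singleton, spent_append_singleton]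
    split_ifs
    · calc mean (P.prob l) (fun x => truncLR u L l * L l x * (truncLR u L' l * L' l x) *
            Real.exp (C * (1 - (spent u l + u l))))
          = mean (P.prob l) (fun x => L l x * L' l x) *
              (Q l * Real.exp (C * (1 - (spent u l + u l)))) := by
            rw [← mean_mul_const]; congr 1; funext x; ring
        _ ≤ Real.exp (u l * C) * (Q l * Real.exp (C * (1 - (spent u l + u l)))) :=
            mul_le_mul_of_nonneg_right (hLL' l) (mul_nonneg (Q_nonneg l) (Real.exp_pos _).le)
        _ = Q l * Real.exp (C * (1 - spent u l)) := by
            rw [mul_left_comm, ← Real.exp_add]; congr 2; ring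
    · simp only [mul_one]
      exact (mean_const (P.sum_prob l) _).le
  have Q_le_Z : ∀ l, Q l ≤ Z l := fun l =>
    le_mul_of_one_le_right (Q_nonneg l) <|
      Real.one_le_exp <| mul_nonneg hC <| by linarith [spent_le_one u l]
  calc mean (P.pathProb T) (fun τ => Q (List.ofFn τ))
      ≤ mean (P.pathProb T) (fun τ => Z (List.ofFn τ)) :=
        mean_mono P.pathProb_nonneg fun τ => Q_le_Z _
    _ ≤ Z [] := P.mean_pathProb_le fun l _ => supermartingale l
    _ = Real.exp C := by simp [Z, Q, truncLR, spent]

lemma mean_tilt_le_mean_truncLR {u : List X → ℝ} (hu : ∀ l, 0 ≤ u l) {L : List X → X → ℝ}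
    (hL : ∀ l x, 0 ≤ L l x) (hL1 : ∀ l, mean (P.prob l) (L l) = 1) {g : List X → ℝ}
    (hg : ∀ l, g l ∈ Set.Icc 0 1) (T : ℕ) :
    mean ((P.tilt L hL hL1).pathProb T) (fun τ => g (List.ofFn τ)) ≤
      mean (P.pathProb T) (fun τ => truncLR u L (List.ofFn τ) *
        min 1 (g (List.ofFn τ) + total u (List.ofFn τ))) := by
  have complement_le : mean (P.pathProb T) (fun τ => truncLR u L (List.ofFn τ) -
        truncLR u L (List.ofFn τ) * min 1 (g (List.ofFn τ) + total u (List.ofFn τ))) ≤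
      mean ((P.tilt L hL hL1).pathProb T) (fun τ => 1 - g (List.ofFn τ)) := by
    refine Finset.sum_le_sum fun τ _ => ?_
    have hg' := hg (List.ofFn τ)
    beta_reduce
    rcases le_or_gt (total u (List.ofFn τ)) 1 with ht | ht
    · rw [pathProb_tilt_of_total_le P hu hL hL1 ht, ← mul_one_sub, ← mul_assoc]
      refine mul_le_mul_of_nonneg_left (sub_le_sub_left (le_min hg'.2 ?_) 1)
        (mul_nonneg (P.pathProb_nonneg τ) (truncLR_nonneg u hL _))
      linarith [total_nonneg hu (List.ofFn τ)]
    · rw [min_eq_left (by linarith [hg'.1]), mul_one, sub_self, mul_zero]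
      exact mul_nonneg (pathProb_nonneg _ τ) (by linarith [hg'.2])
  rw [mean_sub, mean_sub, P.mean_truncLR u hL1, mean_const (sum_pathProb _ T)] at complement_le
  linarith

lemma mean_sq_average_truncLR_le [Nonempty Ω] (u : List X → ℝ) {L : Ω → List X → X → ℝ}
    (hL : ∀ m l x, 0 ≤ L m l x) {C : Ω → Ω → ℝ} (hC : ∀ m m', 0 ≤ C m m')
    (hLL : ∀ m m' l, mean (P.prob l) (fun x => L m l x * L m' l x) ≤ Real.exp (u l * C m m'))
    {χ : ℝ} (hχ : ∑ m, ∑ m', Real.exp (C m m') ≤ (1 + χ) * (Fintype.card Ω : ℝ) ^ 2) (T : ℕ) :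
    mean (P.pathProb T) (fun τ =>
      ((∑ m, truncLR u (L m) (List.ofFn τ)) * (Fintype.card Ω : ℝ)⁻¹) ^ 2) ≤ 1 + χ := by
  have : (0 : ℝ) < Fintype.card Ω := by exact_mod_cast Fintype.card_pos
  have second_moment : mean (P.pathProb T) (fun τ => (∑ m, truncLR u (L m) (List.ofFn τ)) ^ 2) ≤
      (1 + χ) * (Fintype.card Ω : ℝ) ^ 2 := by
    simp only [sq (∑ _, _), Finset.sum_mul_sum, mean_sum]
    exact (Finset.sum_le_sum fun m _ => Finset.sum_le_sum fun m' _ =>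
      P.mean_truncLR_mul_le u (hL m) (hL m') (hC m m') (hLL m m') T).trans hχ
  simp only [mul_pow, mean_mul_const]
  rw [inv_pow, ← div_eq_mul_inv, div_le_iff₀ (by positivity)]
  exact second_moment

/-- A test `g` passing with probability `c` under every tilted law passes with probability almost
`c` under `P`, unless the expected information cost is large.  Truncation at budget `1` is what
allows the costs to be adaptive. -/
lemma le_mean_add_total_of_le_mean_tilt [Nonempty Ω] {u : List X → ℝ} (hu : ∀ l, 0 ≤ u l)
    {L : Ω → List X → X → ℝ} (hL : ∀ m l x, 0 ≤ L m l x)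
    (hL1 : ∀ m l, mean (P.prob l) (L m l) = 1) {C : Ω → Ω → ℝ} (hC : ∀ m m', 0 ≤ C m m')
    (hLL : ∀ m m' l, mean (P.prob l) (fun x => L m l x * L m' l x) ≤ Real.exp (u l * C m m'))
    {χ : ℝ} (hχ : ∑ m, ∑ m', Real.exp (C m m') ≤ (1 + χ) * (Fintype.card Ω : ℝ) ^ 2)
    {g : List X → ℝ} (hg : ∀ l, g l ∈ Set.Icc 0 1) {c : ℝ} {T : ℕ}
    (hc : ∀ m, c ≤ mean ((P.tilt (L m) (hL m) (hL1 m)).pathProb T) fun τ => g (List.ofFn τ)) :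
    c ≤ mean (P.pathProb T) (fun τ => g (List.ofFn τ) + total u (List.ofFn τ)) +
      1 / 8 + 2 * χ := by
  have card_pos : (0 : ℝ) < Fintype.card Ω := by exact_mod_cast Fintype.card_pos
  set D : List X → ℝ := fun l => (∑ m, truncLR u (L m) l) * (Fintype.card Ω : ℝ)⁻¹ with hD
  set F : List X → ℝ := fun l => min 1 (g l + total u l)
  have mean_D : mean (P.pathProb T) (fun τ => D (List.ofFn τ)) = 1 := by
    simp [hD, mean_mul_const, mean_sum, P.mean_truncLR u (hL1 _)]
  have le_mean_mul : c ≤ mean (P.pathProb T) (fun τ => D (List.ofFn τ) * F (List.ofFn τ)) := by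
    have card_mul_le : Fintype.card Ω * c ≤ ∑ m, mean (P.pathProb T) (fun τ =>
        truncLR u (L m) (List.ofFn τ) * F (List.ofFn τ)) := by
      rw [← nsmul_eq_mul]
      exact Finset.card_nsmul_le_sum _ _ _ fun m _ =>
        (hc m).trans (P.mean_tilt_le_mean_truncLR hu (hL m) (hL1 m) hg T)
    simp only [hD, mul_right_comm _ _ (F _), mean_mul_const, Finset.sum_mul, mean_sum]
    rw [← Finset.sum_mul, ← div_eq_mul_inv, le_div_iff₀ card_pos, mul_comm c]
    exact card_mul_le
  calc c ≤ mean (P.pathProb T) (fun τ => D (List.ofFn τ) * F (List.ofFn τ)) := le_mean_mul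
    _ ≤ mean (P.pathProb T) (fun τ => F (List.ofFn τ)) + 1 / 8 + 2 * χ :=
        mean_mul_le_of_mean_sq_le P.pathProb_nonneg (P.sum_pathProb T) mean_D
          (P.mean_sq_average_truncLR_le u hL hC hLL hχ T)
          (fun τ => le_min zero_le_one (add_nonneg (hg _).1 (total_nonneg hu _)))
          (fun τ => min_le_left _ _)
    _ ≤ _ := by
        gcongr
        exact mean_mono P.pathProb_nonneg fun τ => min_le_right _ _

end SeqLaw

end ChangeOfMeasure

/-! ### Latent dynamics: a tree with one secret exit -/

/-- The deterministic dynamics common to all hard instances: the nodes of a tree are moved by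
`move`, and leaving the tree (`exits s a`) leads to the absorbing state `minus`.  The state `plus`
is reached only through a secret exit, see `Lock`. -/
structure LockGraph (S A : Type) where
  plus : S
  minus : S
  root : S
  move : S → A → S
  exits : S → A → Prop
  plus_ne_minus : plus ≠ minus
  root_ne_plus : root ≠ plus
  move_ne_plus : ∀ s a, move s a ≠ plus
  move_minus : ∀ a, move minus a = minus
  move_exits : ∀ s a, exits s a → move s a = minus
  not_exits_minus : ∀ a, ¬ exits minus a

/-- The secret of an instance: playing `action` in state `leaf` at step `time` leads to `plus` with
probability `ε`, and the state then stays at `plus` as long as the actions follow `password`. -/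
structure Lock (S A : Type) where
  time : ℕ
  leaf : S
  action : A
  password : ℕ → A

namespace LockGraph

variable {S O A : Type} (G : LockGraph S A)

/-- The latent state after a history, for the dynamics without a secret exit. -/
def ref (l : List (O × A)) : S := prefixFold G.root (fun _ s p => G.move s p.2) l

@[simp]
lemma ref_nil : G.ref ([] : List (O × A)) = G.root := prefixFold_nil _ _

@[simp]
lemma ref_append_singleton (l : List (O × A)) (p : O × A) :
    G.ref (l ++ [p]) = G.move (G.ref l) p.2 :=
  prefixFold_append_singleton _ _ _ _

lemma ref_ne_plus (l : List (O × A)) : G.ref l ≠ G.plus := by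
  induction l using List.reverseRecOn with
  | nil => rw [ref_nil]; exact G.root_ne_plus
  | append_singleton l p _ => rw [ref_append_singleton]; exact G.move_ne_plus _ _

variable [DecidableEq S] [DecidableEq A]

/-- One step of the dynamics with lock `L`, where the random outcome of the secret move is resolved
to `plus` or `minus` according to `b`. -/
def step (L : Lock S A) (b : Bool) (h : ℕ) (s : S) (a : A) : S :=
  if s = G.plus then (if a = L.password h then G.plus else G.minus)
  else if h = L.time ∧ s = L.leaf ∧ a = L.action then (if b then G.plus else G.minus)
  else G.move s a

/-- The latent state after a history under the resolved dynamics `step L b`. -/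
def path (L : Lock S A) (b : Bool) (l : List (O × A)) : S :=
  prefixFold G.root (fun l s p => G.step L b (l.length + 1) s p.2) l

@[simp]
lemma path_nil (L : Lock S A) (b : Bool) : G.path L b ([] : List (O × A)) = G.root :=
  prefixFold_nil _ _

@[simp]
lemma path_append_singleton (L : Lock S A) (b : Bool) (l : List (O × A)) (p : O × A) :
    G.path L b (l ++ [p]) = G.step L b (l.length + 1) (G.path L b l) p.2 :=
  prefixFold_append_singleton _ _ _ _

lemma path_false_eq_ref {L : Lock S A} (hL : G.exits L.leaf L.action) (l : List (O × A)) :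
    G.path L false l = G.ref l := by
  induction l using List.reverseRecOn with
  | nil => rw [path_nil, ref_nil]
  | append_singleton l p ih =>
    rw [path_append_singleton, ref_append_singleton, ih, step, if_neg (G.ref_ne_plus l)]
    by_cases h : l.length + 1 = L.time ∧ G.ref l = L.leaf ∧ p.2 = L.action
    · rw [if_pos h, if_neg Bool.false_ne_true, h.2.1, h.2.2, G.move_exits _ _ hL]
    · rw [if_neg h]

/-- The two resolved dynamics differ only while the first one sits at `plus`. -/
lemma path_true_eq_plus_or_eq_ref {L : Lock S A} (hL : G.exits L.leaf L.action)
    (l : List (O × A)) :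
    (G.path L true l = G.plus ∧ G.ref l = G.minus) ∨
      (G.path L true l ≠ G.plus ∧ G.path L true l = G.ref l) := by
  induction l using List.reverseRecOn with
  | nil => rw [path_nil, ref_nil]; exact Or.inr ⟨G.root_ne_plus, rfl⟩
  | append_singleton l p ih =>
    rw [path_append_singleton, ref_append_singleton]
    rcases ih with ⟨h_plus, h_ref⟩ | ⟨h_ne, h_ref⟩
    · rw [h_plus, h_ref, G.move_minus, step, if_pos rfl]
      split_ifs
      · exact Or.inl ⟨rfl, rfl⟩
      · exact Or.inr ⟨G.plus_ne_minus.symm, rfl⟩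
    · rw [step, if_neg h_ne, h_ref]
      by_cases h : l.length + 1 = L.time ∧ G.ref l = L.leaf ∧ p.2 = L.action
      · rw [if_pos h, if_pos rfl]
        exact Or.inl ⟨rfl, by rw [h.2.1, h.2.2, G.move_exits _ _ hL]⟩
      · rw [if_neg h]
        exact Or.inr ⟨G.move_ne_plus _ _, rfl⟩

lemma ref_eq_minus_of_path_eq_plus {L : Lock S A} (hL : G.exits L.leaf L.action)
    {l : List (O × A)} (h : G.path L true l = G.plus) : G.ref l = G.minus :=
  ((G.path_true_eq_plus_or_eq_ref hL l).resolve_right fun h' => h'.1 h).2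

lemma path_true_eq_ref {L : Lock S A} (hL : G.exits L.leaf L.action) {l : List (O × A)}
    (h : G.path L true l ≠ G.plus) : G.path L true l = G.ref l :=
  ((G.path_true_eq_plus_or_eq_ref hL l).resolve_left fun h' => h h'.1).2

end LockGraph

/-! ### Emissions and the hard instances -/

/-- The sign of a bit. -/
def sgn (b : Bool) : ℝ := if b then 1 else -1

@[simp] lemma sgn_true : sgn true = 1 := rfl

@[simp] lemma sgn_false : sgn false = -1 := rfl

lemma sgn_mul_self (b : Bool) : sgn b * sgn b = 1 := by cases b <;> simp

lemma abs_sgn (b : Bool) : |sgn b| = 1 := by cases b <;> simp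

/-- The normalized correlation of two sign vectors. -/
def corr {K : ℕ} (μ μ' : Fin K → Bool) : ℝ := (∑ i, sgn (μ i) * sgn (μ' i)) / K

/-- The dynamics together with the emission parameters.  An observation is either the name of a
state or one of the `2K` lock symbols `Fin K × Bool`. -/
structure LockEnv (S O A : Type) (K H : ℕ) extends LockGraph S A where
  obs : O ≃ S ⊕ (Fin K × Bool)
  σ : ℝ
  ε : ℝ
  σ_pos : 0 < σ
  σ_le : σ ≤ 1
  growth : (1 + σ) ^ (2 * H) ≤ 3
  ε_pos : 0 < ε
  ε_le : ε ≤ 1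
  K_pos : 0 < K

namespace LockEnv

section Emissions

variable {S O A : Type} {K H : ℕ} (E : LockEnv S O A K H)

/-- The lock symbol with index `i` and bit `b`. -/
def symbol (i : Fin K) (b : Bool) : O := E.obs.symm (Sum.inr (i, b))

/-- The observation naming the state `s`. -/
def name (s : S) : O := E.obs.symm (Sum.inl s)

lemma name_or_symbol (o : O) : (∃ s, o = E.name s) ∨ ∃ i b, o = E.symbol i b := by
  rcases ho : E.obs o with s | ⟨i, b⟩
  · exact Or.inl ⟨s, by rw [name, ← ho, Equiv.symm_apply_apply]⟩
  · exact Or.inr ⟨i, b, by rw [symbol, ← ho, Equiv.symm_apply_apply]⟩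

/-- The uniform distribution on the lock symbols. -/
def base (o : O) : ℝ := Sum.elim (fun _ => 0) (fun _ => 1 / (2 * K : ℝ)) (E.obs o)

/-- The direction in which the emission of `plus` at step `h` is tilted away from uniform: given by
the hidden signs `μ` before the last step, and by the public bit at the last step. -/
def tilt (μ : Fin K → Bool) (h : ℕ) (o : O) : ℝ :=
  Sum.elim (fun _ => 0) (fun p => if h = H then sgn p.2 else sgn p.2 * sgn (μ p.1)) (E.obs o)

/-- The size of the tilt at step `h`. -/
def amp (h : ℕ) : ℝ := if h = H then 1 else E.σ

/-- The emission likelihood ratio between `plus` and `minus` at step `h`. -/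
def ratio (μ : Fin K → Bool) (h : ℕ) (o : O) : ℝ := 1 + E.amp h * E.tilt μ h o

/-- The indicator of the rewarding lock symbols. -/
def good (o : O) : ℝ := Sum.elim (fun _ => 0) (fun p => if p.2 then 1 else 0) (E.obs o)

@[simp] lemma base_symbol (i : Fin K) (b : Bool) : E.base (E.symbol i b) = 1 / (2 * K : ℝ) := by
  simp [base, symbol]

@[simp] lemma base_name (s : S) : E.base (E.name s) = 0 := by simp [base, name]

@[simp] lemma tilt_symbol (μ : Fin K → Bool) (h : ℕ) (i : Fin K) (b : Bool) :
    E.tilt μ h (E.symbol i b) = if h = H then sgn b else sgn b * sgn (μ i) := by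
  simp [tilt, symbol]

@[simp] lemma tilt_name (μ : Fin K → Bool) (h : ℕ) (s : S) : E.tilt μ h (E.name s) = 0 := by
  simp [tilt, name]

@[simp] lemma good_symbol (i : Fin K) (b : Bool) :
    E.good (E.symbol i b) = if b then 1 else 0 := by
  simp [good, symbol]

@[simp] lemma good_name (s : S) : E.good (E.name s) = 0 := by simp [good, name]

lemma base_nonneg (o : O) : 0 ≤ E.base o := by
  rcases E.name_or_symbol o with ⟨s, rfl⟩ | ⟨i, b, rfl⟩ <;> simp

lemma good_nonneg (o : O) : 0 ≤ E.good o := by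
  rcases E.name_or_symbol o with ⟨s, rfl⟩ | ⟨i, _ | _, rfl⟩ <;> simp

lemma good_le_one (o : O) : E.good o ≤ 1 := by
  rcases E.name_or_symbol o with ⟨s, rfl⟩ | ⟨i, _ | _, rfl⟩ <;> simp

lemma abs_tilt_le_one (μ : Fin K → Bool) (h : ℕ) (o : O) : |E.tilt μ h o| ≤ 1 := by
  rcases E.name_or_symbol o with ⟨s, rfl⟩ | ⟨i, b, rfl⟩
  · simp
  · rw [tilt_symbol]
    split_ifs
    · exact (abs_sgn b).le
    · rw [abs_mul, abs_sgn, abs_sgn, one_mul]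

lemma reward_total_le_one (τ : Fin H → O × A) :
    ∑ h : Fin H, (if h.1 + 1 = H then E.good (τ h).1 else 0) ≤ 1 := by
  cases H with
  | zero => simp
  | succ N =>
    rw [Finset.sum_eq_single (Fin.last N)]
    · rw [if_pos (by simp)]
      exact E.good_le_one _
    · intro h _ hne
      exact if_neg fun hh => hne (Fin.ext (Nat.succ_injective hh))
    · exact fun hnot => absurd (Finset.mem_univ _) hnot

lemma σ_le_amp (h : ℕ) : E.σ ≤ E.amp h := by
  unfold amp
  split_ifs
  · exact E.σ_le
  · exact le_rfl

lemma amp_pos (h : ℕ) : 0 < E.amp h := E.σ_pos.trans_le (E.σ_le_amp h)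

lemma amp_le_one (h : ℕ) : E.amp h ≤ 1 := by
  unfold amp
  split_ifs
  · exact le_rfl
  · exact E.σ_le

lemma ratio_nonneg (μ : Fin K → Bool) (h : ℕ) (o : O) : 0 ≤ E.ratio μ h o := by
  have tilt_ge := (abs_le.mp (E.abs_tilt_le_one μ h o)).1
  unfold ratio
  nlinarith [E.amp_pos h, E.amp_le_one h]

lemma ratio_le (μ : Fin K → Bool) (h : ℕ) (o : O) : E.ratio μ h o ≤ 1 + E.amp h := by
  have tilt_le := (abs_le.mp (E.abs_tilt_le_one μ h o)).2
  unfold ratio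
  nlinarith [E.amp_pos h]

lemma K_ne_zero (E : LockEnv S O A K H) : (K : ℝ) ≠ 0 := by exact_mod_cast E.K_pos.ne'

lemma corr_self (E : LockEnv S O A K H) (μ : Fin K → Bool) : corr μ μ = 1 := by
  simp [corr, sgn_mul_self, E.K_ne_zero]

section Moments

variable [Fintype O]

lemma mean_base (Φ : O → ℝ) :
    mean E.base Φ = (∑ i, (Φ (E.symbol i true) + Φ (E.symbol i false))) / (2 * K) := by
  let _ : Fintype S := Fintype.ofInjective E.name (E.obs.symm.injective.comp Sum.inl_injective)
  have sum_names : ∑ s, E.base (E.name s) * Φ (E.name s) = 0 :=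
    Finset.sum_eq_zero fun s _ => by rw [base_name, zero_mul]
  calc mean E.base Φ
      = ∑ s, E.base (E.name s) * Φ (E.name s) +
          ∑ p : Fin K × Bool, E.base (E.symbol p.1 p.2) * Φ (E.symbol p.1 p.2) := by
        rw [mean, ← E.obs.symm.sum_comp, Fintype.sum_sum_type]
        rfl
    _ = ∑ i, 1 / (2 * K : ℝ) * (Φ (E.symbol i true) + Φ (E.symbol i false)) := by
        simp only [sum_names, zero_add, Fintype.sum_prod_type, Fintype.sum_bool, base_symbol,
          mul_add]
    _ = _ := by rw [← Finset.mul_sum, one_div_mul_eq_div]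

lemma mean_base_congr {Φ Ψ : O → ℝ} (h : ∀ i b, Φ (E.symbol i b) = Ψ (E.symbol i b)) :
    mean E.base Φ = mean E.base Ψ := by
  simp only [mean_base, h]

lemma sum_base : ∑ o, E.base o = 1 := by
  have hK := E.K_ne_zero
  have mean_one : mean E.base (fun _ => 1) = 1 := by
    rw [mean_base, Finset.sum_const, Finset.card_univ, Fintype.card_fin, nsmul_eq_mul]
    field_simp
    norm_num
  simpa only [mean, mul_one] using mean_one

lemma mean_base_tilt (μ : Fin K → Bool) (h : ℕ) : mean E.base (E.tilt μ h) = 0 := by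
  rw [mean_base]
  simp only [tilt_symbol]
  split_ifs <;> simp

lemma mean_base_tilt_mul_tilt (μ μ' : Fin K → Bool) (h : ℕ) :
    mean E.base (fun o => E.tilt μ h o * E.tilt μ' h o) = if h = H then 1 else corr μ μ' := by
  have hK := E.K_ne_zero
  rw [mean_base]
  simp only [tilt_symbol]
  split_ifs
  · simp only [sgn_mul_self, Finset.sum_const, Finset.card_univ, Fintype.card_fin, nsmul_eq_mul]
    field_simp
    norm_num
  · simp only [sgn_true, sgn_false, corr]
    rw [← div_div, Finset.sum_div]
    congr 1
    refine Finset.sum_congr rfl fun i _ => ?_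
    ring

lemma mean_base_good : mean E.base E.good = 1 / 2 := by
  have hK := E.K_ne_zero
  rw [mean_base]
  simp
  field_simp

lemma mean_base_good_mul_tilt (μ : Fin K → Bool) :
    mean E.base (fun o => E.good o * E.tilt μ H o) = 1 / 2 := by
  have hK := E.K_ne_zero
  rw [mean_base]
  simp
  field_simp

lemma mean_base_ratio (μ : Fin K → Bool) (h : ℕ) : mean E.base (E.ratio μ h) = 1 := by
  unfold ratio
  rw [mean_add, mean_const E.sum_base, mean_const_mul, mean_base_tilt, mul_zero, add_zero]

lemma mean_base_tilt_mul_ratio (μ μ' : Fin K → Bool) (h : ℕ) :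
    mean E.base (fun o => E.tilt μ h o * E.ratio μ' h o) =
      E.amp h * if h = H then 1 else corr μ μ' := by
  simp only [ratio, mul_add, mul_one, mul_left_comm _ (E.amp h)]
  rw [mean_add, mean_const_mul, mean_base_tilt, mean_base_tilt_mul_tilt, zero_add]

lemma mean_base_ratio_mul_ratio (μ μ' : Fin K → Bool) (h : ℕ) :
    mean E.base (fun o => E.ratio μ h o * E.ratio μ' h o) =
      1 + if h = H then 1 else E.σ ^ 2 * corr μ μ' := by
  have expand : ∀ o, E.ratio μ h o * E.ratio μ' h o =
      E.ratio μ' h o + E.amp h * (E.tilt μ h o * E.ratio μ' h o) := fun o => by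
    rw [ratio, add_mul, one_mul, mul_assoc]
  simp only [expand]
  rw [mean_add, mean_const_mul, mean_base_ratio, mean_base_tilt_mul_ratio]
  unfold amp
  split_ifs <;> ring

lemma mean_base_good_mul_ratio (μ : Fin K → Bool) :
    mean E.base (fun o => E.good o * E.ratio μ H o) = 1 := by
  simp only [ratio, amp, if_true, one_mul, mul_add, mul_one]
  rw [mean_add, mean_base_good, mean_base_good_mul_tilt]
  norm_num

end Moments

variable [DecidableEq S] [DecidableEq O]

/-- The emission without a secret exit: tree states are revealed, and both lock states emit uniform
symbols. -/
def refEmit (s : S) : O → ℝ :=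
  if s = E.plus ∨ s = E.minus then E.base else Pi.single (E.name s) 1

lemma refEmit_plus : E.refEmit E.plus = E.base := if_pos (Or.inl rfl)

lemma refEmit_minus : E.refEmit E.minus = E.base := if_pos (Or.inr rfl)

lemma refEmit_nonneg (s : S) (o : O) : 0 ≤ E.refEmit s o := by
  unfold refEmit
  split_ifs
  · exact E.base_nonneg o
  · exact (Pi.single_nonneg (α := fun _ => ℝ) (i := E.name s)).mpr zero_le_one o

variable [Fintype O]

lemma mean_refEmit_of_tree {s : S} (hs : ¬(s = E.plus ∨ s = E.minus)) (Φ : O → ℝ) :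
    mean (E.refEmit s) Φ = Φ (E.name s) := by
  simp [refEmit, if_neg hs, mean, Pi.single_apply]

lemma sum_refEmit (s : S) : ∑ o, E.refEmit s o = 1 := by
  by_cases hs : s = E.plus ∨ s = E.minus
  · rw [refEmit, if_pos hs, E.sum_base]
  · simpa [mean] using E.mean_refEmit_of_tree hs fun _ => 1

lemma mean_refEmit_good_le (s : S) : mean (E.refEmit s) E.good ≤ 1 / 2 := by
  by_cases hs : s = E.plus ∨ s = E.minus
  · rw [refEmit, if_pos hs, E.mean_base_good]
  · rw [E.mean_refEmit_of_tree hs, good_name]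
    norm_num

end Emissions

section Model

variable {S O A : Type} {K H : ℕ} (E : LockEnv S O A K H)
  [Fintype S] [Fintype O] [Fintype A] [DecidableEq S] [DecidableEq O] [DecidableEq A]

/-- The hard instance with lock `L` and hidden emission signs `μ`. -/
def model (L : Lock S A) (μ : Fin K → Bool) : POMDP S O A H where
  init s := if s = E.root then 1 else 0
  init_nonneg s := by split_ifs <;> norm_num
  init_sum := by simp
  trans h s a s' := (1 - E.ε) * (if s' = E.step L false h s a then 1 else 0) +
    E.ε * (if s' = E.step L true h s a then 1 else 0)
  trans_nonneg h s a s' := by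
    have ε_pos := E.ε_pos
    have one_sub_ε_nonneg : 0 ≤ 1 - E.ε := sub_nonneg.mpr E.ε_le
    positivity
  trans_sum h s a := by simp [Finset.sum_add_distrib]
  emit h s o := E.refEmit s o * (if s = E.plus then E.ratio μ h o else 1)
  emit_nonneg h s o := by
    refine mul_nonneg (E.refEmit_nonneg s o) ?_
    split_ifs
    · exact E.ratio_nonneg μ h o
    · exact zero_le_one
  emit_sum h s := by
    by_cases hs : s = E.plus
    · simp only [hs, if_true, refEmit_plus]
      exact E.mean_base_ratio μ h
    · simpa [hs] using E.sum_refEmit s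
  reward h o _ := if h = H then E.good o else 0
  reward_nonneg h o _ := by
    split_ifs
    · exact E.good_nonneg o
    · exact le_rfl
  reward_le_one h o _ := by
    split_ifs
    · exact E.good_le_one o
    · exact zero_le_one
  reward_total := E.reward_total_le_one

lemma emit_model_plus (L : Lock S A) (μ : Fin K → Bool) (h : ℕ) (o : O) :
    (E.model L μ).emit h E.plus o = E.base o * E.ratio μ h o := by
  simp [model, refEmit_plus]

lemma emit_model_of_ne_plus (L : Lock S A) (μ : Fin K → Bool) (h : ℕ) {s : S} (hs : s ≠ E.plus) :
    (E.model L μ).emit h s = E.refEmit s := by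
  funext o
  simp [model, hs]

end Model

end LockEnv

/-! ### The revealing property -/

/-- There is only one (empty) action sequence, so `‖·‖_*` is the `ℓ¹` norm. -/
lemma opNormStarOne_le_of_sum_abs_le {S O A : Type} [Fintype S] [Fintype O] [Fintype A]
    {B : Matrix S ((Fin 1 → O) × (Fin (1 - 1) → A)) ℝ} {c : ℝ}
    (hB : ∀ p, ∑ s, |B s p| ≤ c) (hc : 0 ≤ c) : opNormStarOne B ≤ c := by
  let _ : Unique (Fin (1 - 1) → A) := inferInstanceAs (Unique (Fin 0 → A))
  have starNorm_eq : ∀ x : (Fin 1 → O) × (Fin (1 - 1) → A) → ℝ, starNorm x = ∑ p, |x p| := by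
    intro x
    simp only [starNorm, Fintype.sum_unique, Fintype.sum_prod_type]
    exact Real.sqrt_sq (Finset.sum_nonneg fun _ _ => abs_nonneg _)
  refine csSup_le ⟨_, 0, by simp [starNorm], rfl⟩ ?_
  rintro y ⟨x, hx, rfl⟩
  calc ∑ s, |B.mulVec x s|
      ≤ ∑ s, ∑ p, |B s p| * |x p| := by
        simp only [← abs_mul]
        exact Finset.sum_le_sum fun s _ => Finset.abs_sum_le_sum_abs _ _
    _ = ∑ p, (∑ s, |B s p|) * |x p| := by
        simp only [Finset.sum_mul]
        exact Finset.sum_comm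
    _ ≤ ∑ p, c * |x p| :=
        Finset.sum_le_sum fun p _ => mul_le_mul_of_nonneg_right (hB p) (abs_nonneg _)
    _ ≤ c := by
        rw [← Finset.mul_sum, ← starNorm_eq]
        exact mul_le_of_le_one_right hc hx

namespace LockEnv

variable {S O A : Type} {K H : ℕ} (E : LockEnv S O A K H) [DecidableEq S]

/-- A left inverse of the step-`h` emission matrix: tree observations name their state, and the
tilt separates the two lock states. -/
def leftInv (μ : Fin K → Bool) (h : ℕ) (s : S) (o : O) : ℝ :=
  Sum.elim (fun t => if t = E.plus ∨ t = E.minus then 0 else if s = t then 1 else 0)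
    (fun _ => if s = E.plus then E.tilt μ h o / E.amp h
      else if s = E.minus then 1 - E.tilt μ h o / E.amp h else 0) (E.obs o)

lemma leftInv_name (μ : Fin K → Bool) (h : ℕ) (s t : S) :
    E.leftInv μ h s (E.name t) =
      if t = E.plus ∨ t = E.minus then 0 else if s = t then 1 else 0 := by
  simp [leftInv, name]

lemma leftInv_symbol (μ : Fin K → Bool) (h : ℕ) (s : S) (i : Fin K) (b : Bool) :
    E.leftInv μ h s (E.symbol i b) =
      if s = E.plus then E.tilt μ h (E.symbol i b) / E.amp h
      else if s = E.minus then 1 - E.tilt μ h (E.symbol i b) / E.amp h else 0 := by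
  conv_lhs => rw [leftInv, symbol, Equiv.apply_symm_apply]
  rfl

lemma sum_abs_leftInv_le [Fintype S] (μ : Fin K → Bool) (h : ℕ) (o : O) :
    ∑ s, |E.leftInv μ h s o| ≤ 1 + 2 / E.σ := by
  have two_div_pos : 0 < 2 / E.σ := div_pos two_pos E.σ_pos
  rcases E.name_or_symbol o with ⟨t, rfl⟩ | ⟨i, b, rfl⟩
  · simp only [leftInv_name, apply_ite abs, abs_one, abs_zero]
    split_ifs
    · simp only [Finset.sum_const_zero]
      linarith
    · rw [Finset.sum_ite_eq' Finset.univ t, if_pos (Finset.mem_univ t)]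
      linarith
  · set d := E.tilt μ h (E.symbol i b) / E.amp h with hd
    have abs_d_le : |d| ≤ 1 / E.σ := by
      rw [hd, abs_div, abs_of_pos (E.amp_pos h)]
      exact div_le_div₀ zero_le_one (E.abs_tilt_le_one μ h _) E.σ_pos (E.σ_le_amp h)
    have sum_eq : ∑ s, |E.leftInv μ h s (E.symbol i b)| = |d| + |1 - d| := by
      rw [Finset.sum_eq_add E.plus E.minus E.plus_ne_minus]
      · simp [leftInv_symbol, E.plus_ne_minus.symm, hd]
      · intro s _ hs
        rw [leftInv_symbol, if_neg hs.1, if_neg hs.2, abs_zero]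
      · exact fun hnot => absurd (Finset.mem_univ _) hnot
      · exact fun hnot => absurd (Finset.mem_univ _) hnot
    have abs_one_sub_le : |1 - d| ≤ 1 + |d| := by simpa using abs_sub 1 d
    have two_div_eq : 2 / E.σ = 1 / E.σ + 1 / E.σ := by ring
    linarith

variable [Fintype O]

lemma mean_base_leftInv_mul (μ : Fin K → Bool) (h : ℕ) (s : S) (Φ : O → ℝ) :
    mean E.base (fun o => E.leftInv μ h s o * Φ o) =
      if s = E.plus then mean E.base (fun o => E.tilt μ h o * Φ o) / E.amp h
      else if s = E.minus then
        mean E.base Φ - mean E.base (fun o => E.tilt μ h o * Φ o) / E.amp h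
      else 0 := by
  have on_symbols : mean E.base (fun o => E.leftInv μ h s o * Φ o) =
      mean E.base (fun o => (if s = E.plus then E.tilt μ h o / E.amp h
        else if s = E.minus then 1 - E.tilt μ h o / E.amp h else 0) * Φ o) :=
    E.mean_base_congr fun i b => by rw [leftInv_symbol]
  rw [on_symbols]
  split_ifs
  · simp only [div_eq_mul_inv, mul_right_comm _ (E.amp h)⁻¹, mean_mul_const]
  · simp only [sub_mul, one_mul, div_eq_mul_inv, mul_right_comm _ (E.amp h)⁻¹, mean_sub,
      mean_mul_const]
  · simp only [zero_mul, mean_const E.sum_base]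

lemma mean_base_leftInv (μ : Fin K → Bool) (h : ℕ) (s : S) :
    mean E.base (E.leftInv μ h s) = if s = E.minus then 1 else 0 := by
  have moments := E.mean_base_leftInv_mul μ h s fun _ => 1
  simp only [mul_one, mean_base_tilt, mean_const E.sum_base, zero_div, sub_zero] at moments
  rw [moments]
  split_ifs with hs_plus hs_minus
  · exact absurd (hs_plus.symm.trans hs_minus) E.plus_ne_minus
  all_goals rfl

lemma mean_base_leftInv_mul_ratio (μ : Fin K → Bool) (h : ℕ) (s : S) :
    mean E.base (fun o => E.leftInv μ h s o * E.ratio μ h o) = if s = E.plus then 1 else 0 := by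
  rw [mean_base_leftInv_mul, mean_base_tilt_mul_ratio, mean_base_ratio, E.corr_self, ite_self,
    mul_one, div_self (E.amp_pos h).ne', sub_self, ite_self]

variable [DecidableEq O] [Fintype S] [Fintype A] [DecidableEq A]

lemma sum_leftInv_mul_emit (L : Lock S A) (μ : Fin K → Bool) (h : ℕ) (s t : S) :
    ∑ o, E.leftInv μ h s o * (E.model L μ).emit h t o = if s = t then 1 else 0 := by
  by_cases ht : t = E.plus
  · subst ht
    rw [← E.mean_base_leftInv_mul_ratio μ h s]
    refine Finset.sum_congr rfl fun o _ => ?_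
    rw [emit_model_plus, mul_left_comm]
  · have as_mean : ∑ o, E.leftInv μ h s o * (E.model L μ).emit h t o =
        mean (E.refEmit t) (E.leftInv μ h s) := by
      rw [E.emit_model_of_ne_plus L μ h ht]
      exact Finset.sum_congr rfl fun o _ => mul_comm _ _
    rw [as_mean]
    by_cases ht' : t = E.minus
    · rw [ht', refEmit_minus, E.mean_base_leftInv]
    · have tree : ¬(t = E.plus ∨ t = E.minus) := not_or.mpr ⟨ht, ht'⟩
      rw [E.mean_refEmit_of_tree tree, leftInv_name, if_neg tree]

lemma isRevealing_model (L : Lock S A) (μ : Fin K → Bool) :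
    (E.model L μ).IsRevealing 1 (E.σ / (E.σ + 2)) := by
  intro h _
  let _ : Unique (Fin (1 - 1) → A) := inferInstanceAs (Unique (Fin 0 → A))
  have σ_pos := E.σ_pos
  set B : Matrix S ((Fin 1 → O) × (Fin (1 - 1) → A)) ℝ :=
    Matrix.of fun s p => E.leftInv μ h s (p.1 0)
  have left_inverse : B * (E.model L μ).emitActMatrix h 1 = 1 := by
    ext s t
    rw [Matrix.mul_apply, Matrix.one_apply, ← E.sum_leftInv_mul_emit L μ h s t,
      Fintype.sum_prod_type]
    simp only [Fintype.sum_unique]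
    exact (Equiv.funUnique (Fin 1) O).sum_comp
      (fun o => E.leftInv μ h s o * (E.model L μ).emit h t o)
  have inv_alpha : 1 / (E.σ / (E.σ + 2)) = 1 + 2 / E.σ := by
    field_simp
  refine ⟨B, fun c _ => by rw [left_inverse, Matrix.one_mulVec], ?_⟩
  rw [inv_alpha]
  exact opNormStarOne_le_of_sum_abs_le (fun p => E.sum_abs_leftInv_le μ h (p.1 0)) (by positivity)

end LockEnv

/-! ### The law of an episode -/

section DeterministicDynamics

variable {S O A : Type} {H : ℕ}

/-- The state after a history, started at `r` and moved by the time-dependent dynamics `D`. -/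
def run (D : ℕ → S → A → S) (r : S) (l : List (O × A)) : S :=
  prefixFold r (fun l s p => D (l.length + 1) s p.2) l

/-- The state that `D` prescribes at time `h` along the trajectory `τ`, given the states `s` at the
earlier times. -/
def successor (D : ℕ → S → A → S) (r : S) (τ : Fin H → O × A) (s : Fin H → S) (h : Fin H) : S :=
  if h.1 = 0 then r
  else D h.1 (s ⟨h.1 - 1, Nat.lt_of_le_of_lt (Nat.sub_le _ _) h.2⟩)
    (τ ⟨h.1 - 1, Nat.lt_of_le_of_lt (Nat.sub_le _ _) h.2⟩).2

lemma run_take_succ (D : ℕ → S → A → S) (r : S) (τ : Fin H → O × A) {i : ℕ} (hi : i < H) :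
    run D r ((List.ofFn τ).take (i + 1)) =
      D (i + 1) (run D r ((List.ofFn τ).take i)) (τ ⟨i, hi⟩).2 := by
  rw [List.take_succ_eq_append_getElem (by simpa using hi), run, prefixFold_append_singleton]
  simp [run, hi.le]

lemma eq_successor_iff (D : ℕ → S → A → S) (r : S) (τ : Fin H → O × A) (s : Fin H → S) :
    (∀ h, s h = successor D r τ s h) ↔ s = fun h => run D r ((List.ofFn τ).take h.1) := by
  constructor
  · intro hs
    have pointwise : ∀ i (hi : i < H), s ⟨i, hi⟩ = run D r ((List.ofFn τ).take i) := by
      intro i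
      induction i with
      | zero => intro hi; simpa [successor, run] using hs ⟨0, hi⟩
      | succ i ih =>
        intro hi
        rw [run_take_succ D r τ (Nat.lt_of_succ_lt hi), ← ih, hs ⟨i + 1, hi⟩]
        rfl
    exact funext fun h => pointwise h.1 h.2
  · rintro rfl ⟨_ | i, hi⟩
    · simp [successor, run]
    · exact run_take_succ D r τ (Nat.lt_of_succ_lt hi)

/-- With deterministic dynamics the sum over latent paths has a single nonzero term. -/
lemma sum_prod_successor [Fintype S] [DecidableEq S] (D : ℕ → S → A → S) (r : S)
    (φ : Fin H → S → ℝ) (τ : Fin H → O × A) :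
    ∑ s : Fin H → S, ∏ h, (if s h = successor D r τ s h then 1 else 0) * φ h (s h) =
      ∏ h : Fin H, φ h (run D r ((List.ofFn τ).take h.1)) := by
  simp only [ite_mul, one_mul, zero_mul, Finset.prod_ite_zero, Finset.mem_univ, forall_true_left,
    eq_successor_iff, Finset.sum_ite_eq', if_true]

lemma prod_convexCombination_mul {ι : Type*} [Fintype ι] {c : ℝ} {f g : ι → ℝ} (φ : ι → ℝ) {j : ι}
    (hfg : ∀ i, i ≠ j → f i = g i) :
    ∏ i, ((1 - c) * f i + c * g i) * φ i =
      (1 - c) * ∏ i, f i * φ i + c * ∏ i, g i * φ i := by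
  classical
  have off_f : ∏ i ∈ Finset.univ.erase j, f i * φ i = ∏ i ∈ Finset.univ.erase j, g i * φ i :=
    Finset.prod_congr rfl fun i hi => by rw [hfg i (Finset.ne_of_mem_erase hi)]
  have off_mix : ∏ i ∈ Finset.univ.erase j, ((1 - c) * f i + c * g i) * φ i =
      ∏ i ∈ Finset.univ.erase j, g i * φ i :=
    Finset.prod_congr rfl fun i hi => by rw [hfg i (Finset.ne_of_mem_erase hi)]; ring
  rw [← Finset.mul_prod_erase _ _ (Finset.mem_univ j),
    ← Finset.mul_prod_erase _ (fun i => f i * φ i) (Finset.mem_univ j),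
    ← Finset.mul_prod_erase _ (fun i => g i * φ i) (Finset.mem_univ j), off_f, off_mix]
  ring

end DeterministicDynamics

namespace LockEnv

variable {S O A : Type} {K H : ℕ} (E : LockEnv S O A K H) [DecidableEq S]

section Likelihood

variable [DecidableEq A] (L : Lock S A) (μ μ' : Fin K → Bool)

/-- The factor by which the next observation and action `p` change the likelihood ratio `lr`. -/
def lrFactor (l : List (O × A)) (p : O × A) : ℝ :=
  if E.path L true l = E.plus then E.ratio μ (l.length + 1) p.1 else 1

/-- The likelihood ratio of the history `l` for the dynamics in which the secret move surely leads
to `plus`, relative to the dynamics without a secret exit. -/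
def lr (l : List (O × A)) : ℝ := prefixFold 1 (fun l c p => c * E.lrFactor L μ l p) l

/-- The likelihood ratio of an episode of the instance `(L, μ)`. -/
def episodeLR (l : List (O × A)) : ℝ :=
  1 - E.ε + E.ε * E.lr L μ l

@[simp]
lemma lr_nil : E.lr L μ [] = 1 := prefixFold_nil _ _

lemma lr_append_singleton (l : List (O × A)) (p : O × A) :
    E.lr L μ (l ++ [p]) = E.lr L μ l * E.lrFactor L μ l p :=
  prefixFold_append_singleton _ _ _ _

lemma lrFactor_nonneg (l : List (O × A)) (p : O × A) : 0 ≤ E.lrFactor L μ l p := by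
  unfold lrFactor
  split_ifs
  · exact E.ratio_nonneg _ _ _
  · exact zero_le_one

lemma lr_nonneg (l : List (O × A)) : 0 ≤ E.lr L μ l := by
  induction l using List.reverseRecOn with
  | nil => rw [lr_nil]; exact zero_le_one
  | append_singleton l p ih =>
    rw [lr_append_singleton]
    exact mul_nonneg ih (E.lrFactor_nonneg L μ l p)

lemma episodeLR_nonneg (l : List (O × A)) : 0 ≤ E.episodeLR L μ l :=
  add_nonneg (sub_nonneg.mpr E.ε_le) (mul_nonneg E.ε_pos.le (E.lr_nonneg L μ l))

lemma lr_le_pow {l : List (O × A)} (hl : l.length < H) : E.lr L μ l ≤ (1 + E.σ) ^ l.length := by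
  have σ_pos := E.σ_pos
  induction l using List.reverseRecOn with
  | nil => simp
  | append_singleton l p ih =>
    rw [List.length_append, List.length_singleton] at hl ⊢
    have factor_le : E.lrFactor L μ l p ≤ 1 + E.σ := by
      unfold lrFactor
      split_ifs
      · exact (E.ratio_le _ _ _).trans_eq (by rw [amp, if_neg (by omega)])
      · linarith
    rw [lr_append_singleton, pow_succ]
    exact mul_le_mul (ih (by omega)) factor_le (E.lrFactor_nonneg L μ l p) (by positivity)

lemma lr_mul_lr_le {l : List (O × A)} (hl : l.length < H) : E.lr L μ l * E.lr L μ' l ≤ 3 := by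
  have σ_pos := E.σ_pos
  calc E.lr L μ l * E.lr L μ' l
      ≤ (1 + E.σ) ^ l.length * (1 + E.σ) ^ l.length :=
        mul_le_mul (E.lr_le_pow L μ hl) (E.lr_le_pow L μ' hl) (E.lr_nonneg _ _ _) (by positivity)
    _ = (1 + E.σ) ^ (2 * l.length) := by rw [← pow_add, two_mul]
    _ ≤ (1 + E.σ) ^ (2 * H) := pow_le_pow_right₀ (by linarith) (by omega)
    _ ≤ 3 := E.growth

lemma lr_le {l : List (O × A)} (hl : l.length < H) : E.lr L μ l ≤ 7 / 4 := by
  nlinarith [E.lr_mul_lr_le L μ μ hl, E.lr_nonneg L μ l]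

end Likelihood

variable [DecidableEq O] [Fintype O] [Fintype A]

/-- The law of the observations and actions of the policy `π` when there is no secret exit. -/
def refLaw (π : Policy O A) : SeqLaw (O × A) where
  prob l p := E.refEmit (E.ref l) p.1 * π.act l p.1 p.2
  prob_nonneg _ _ := mul_nonneg (E.refEmit_nonneg _ _) (π.act_nonneg _ _ _)
  sum_prob l := by
    simp only [Fintype.sum_prod_type, ← Finset.mul_sum, π.act_sum, mul_one, E.sum_refEmit]

lemma mean_refLaw_fst (π : Policy O A) (l : List (O × A)) (Φ : O → ℝ) :
    mean ((E.refLaw π).prob l) (fun p => Φ p.1) = mean (E.refEmit (E.ref l)) Φ := by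
  simp only [mean, refLaw, Fintype.sum_prod_type, mul_right_comm _ _ (Φ _), ← Finset.mul_sum,
    π.act_sum, mul_one]

section EpisodeLaw

variable [Fintype S] [DecidableEq A] {L : Lock S A} (hL : E.exits L.leaf L.action)
  (μ : Fin K → Bool) (π : Policy O A)
include hL

lemma emit_path_false_mul_act (l : List (O × A)) (h : ℕ) (p : O × A) :
    (E.model L μ).emit h (E.path L false l) p.1 * π.act l p.1 p.2 = (E.refLaw π).prob l p := by
  rw [E.path_false_eq_ref hL, E.emit_model_of_ne_plus L μ h (E.ref_ne_plus l)]
  rfl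

lemma emit_path_true_mul_act (l : List (O × A)) (p : O × A) :
    (E.model L μ).emit (l.length + 1) (E.path L true l) p.1 * π.act l p.1 p.2 =
      (E.refLaw π).prob l p * E.lrFactor L μ l p := by
  by_cases h : E.path L true l = E.plus
  · simp only [lrFactor, refLaw, h, if_true, emit_model_plus, E.ref_eq_minus_of_path_eq_plus hL h,
      refEmit_minus]
    ring
  · rw [lrFactor, if_neg h, E.emit_model_of_ne_plus L μ _ h, E.path_true_eq_ref hL h, mul_one]
    rfl

omit hL in
lemma trajProb_model_eq_sum (hH : L.time < H) (τ : Fin H → O × A) :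
    (E.model L μ).trajProb π τ =
      (1 - E.ε) * ∏ h : Fin H, (E.model L μ).emit (h.1 + 1)
          (E.path L false ((List.ofFn τ).take h.1)) (τ h).1 *
          π.act ((List.ofFn τ).take h.1) (τ h).1 (τ h).2 +
        E.ε * ∏ h : Fin H, (E.model L μ).emit (h.1 + 1)
          (E.path L true ((List.ofFn τ).take h.1)) (τ h).1 *
          π.act ((List.ofFn τ).take h.1) (τ h).1 (τ h).2 := by
  set φ : Fin H → S → ℝ := fun h s => (E.model L μ).emit (h.1 + 1) s (τ h).1 *
    π.act ((List.ofFn τ).take h.1) (τ h).1 (τ h).2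
  set follows : Bool → (Fin H → S) → Fin H → ℝ := fun b s h =>
    if s h = successor (E.step L b) E.root τ s h then 1 else 0 with hfollows
  have factor : ∀ (s : Fin H → S) (h : Fin H),
      (if h.1 = 0 then (E.model L μ).init (s h)
        else (E.model L μ).trans h.1 (s ⟨h.1 - 1, Nat.lt_of_le_of_lt (Nat.sub_le _ _) h.2⟩)
          (τ ⟨h.1 - 1, Nat.lt_of_le_of_lt (Nat.sub_le _ _) h.2⟩).2 (s h)) =
        (1 - E.ε) * follows false s h + E.ε * follows true s h := fun s h => by
    simp only [hfollows, successor]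
    by_cases h0 : h.1 = 0
    · simp only [if_pos h0, model]
      ring
    · simp only [if_neg h0]
      rfl
  have agree : ∀ s (h : Fin H), h ≠ ⟨L.time, hH⟩ → follows false s h = follows true s h :=
    fun s h hne => by
      have time_ne : h.1 ≠ L.time := fun hh => hne (Fin.ext hh)
      simp [hfollows, successor, LockGraph.step, time_ne]
  calc (E.model L μ).trajProb π τ
      = ∑ s : Fin H → S, ∏ h,
          ((1 - E.ε) * follows false s h + E.ε * follows true s h) * φ h (s h) :=
        Finset.sum_congr rfl fun s _ => Finset.prod_congr rfl fun h _ => by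
          rw [factor, mul_assoc]
    _ = ∑ s : Fin H → S, ((1 - E.ε) * ∏ h, follows false s h * φ h (s h) +
          E.ε * ∏ h, follows true s h * φ h (s h)) :=
        Finset.sum_congr rfl fun s _ => prod_convexCombination_mul _ (agree s)
    _ = _ := by
        rw [Finset.sum_add_distrib, ← Finset.mul_sum, ← Finset.mul_sum]
        simp only [hfollows, sum_prod_successor]
        rfl

/-- The random transition is used at most once, so the law of an episode is affine in `ε`. -/
lemma trajProb_model (hH : L.time < H) (τ : Fin H → O × A) :
    (E.model L μ).trajProb π τ =
      (E.refLaw π).pathProb H τ * E.episodeLR L μ (List.ofFn τ) := by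
  have along_true : ∀ h : Fin H, (E.model L μ).emit (h.1 + 1)
      (E.path L true ((List.ofFn τ).take h.1)) (τ h).1 *
        π.act ((List.ofFn τ).take h.1) (τ h).1 (τ h).2 =
      (E.refLaw π).prob ((List.ofFn τ).take h.1) (τ h) *
        E.lrFactor L μ ((List.ofFn τ).take h.1) (τ h) := fun h => by
    rw [← E.emit_path_true_mul_act hL μ π, List.length_take_of_le (by simp [h.2.le])]
  simp only [E.trajProb_model_eq_sum μ π hH, E.emit_path_false_mul_act hL μ π, along_true]
  rw [Finset.prod_mul_distrib, episodeLR, lr, prefixFold_mul_ofFn, SeqLaw.pathProb]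
  ring

end EpisodeLaw

end LockEnv

/-! ### Moments of the likelihood ratio -/

namespace LockEnv

variable {S O A : Type} {K H : ℕ} (E : LockEnv S O A K H) [DecidableEq S] [DecidableEq A]

/-- The indicator that the secret has been unlocked and `plus` has not been left. -/
def atPlus (L : Lock S A) (l : List (O × A)) : ℝ := if E.path L true l = E.plus then 1 else 0

lemma atPlus_nonneg (L : Lock S A) (l : List (O × A)) : 0 ≤ E.atPlus L l := by
  unfold atPlus
  split_ifs <;> norm_num

lemma atPlus_le_one (L : Lock S A) (l : List (O × A)) : E.atPlus L l ≤ 1 := by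
  unfold atPlus
  split_ifs <;> norm_num

variable [DecidableEq O] [Fintype O] [Fintype A]

/-- The probability of sitting at `plus` after `h` steps, if the secret move surely leads there but
observations and actions follow the reference law of `π`. -/
def plusProb (L : Lock S A) (π : Policy O A) (h : ℕ) : ℝ :=
  mean ((E.refLaw π).pathProb h) fun τ => E.atPlus L (List.ofFn τ)

/-- The expected number of steps before the last one at which the state is `plus`. -/
def earlyTime (L : Lock S A) (π : Policy O A) : ℝ := ∑ h ∈ Finset.range (H - 1), E.plusProb L π h

/-- The probability that the state is `plus` at the last step. -/
def finalProb (L : Lock S A) (π : Policy O A) : ℝ := E.plusProb L π (H - 1)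

lemma plusProb_nonneg (L : Lock S A) (π : Policy O A) (h : ℕ) : 0 ≤ E.plusProb L π h :=
  mean_nonneg (SeqLaw.pathProb_nonneg _) fun _ => E.atPlus_nonneg L _

lemma earlyTime_nonneg (L : Lock S A) (π : Policy O A) : 0 ≤ E.earlyTime L π :=
  Finset.sum_nonneg fun h _ => E.plusProb_nonneg L π h

lemma finalProb_nonneg (L : Lock S A) (π : Policy O A) : 0 ≤ E.finalProb L π :=
  E.plusProb_nonneg L π _

variable {L : Lock S A} (hL : E.exits L.leaf L.action) (μ μ' : Fin K → Bool) (π : Policy O A)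
include hL

lemma mean_refLaw_of_path_eq_plus {l : List (O × A)} (h : E.path L true l = E.plus) (Φ : O → ℝ) :
    mean ((E.refLaw π).prob l) (fun p => Φ p.1) = mean E.base Φ := by
  rw [mean_refLaw_fst, E.ref_eq_minus_of_path_eq_plus hL h, refEmit_minus]

lemma mean_lrFactor (l : List (O × A)) :
    mean ((E.refLaw π).prob l) (E.lrFactor L μ l) = 1 := by
  unfold lrFactor
  split_ifs with h
  · rw [E.mean_refLaw_of_path_eq_plus hL π h, mean_base_ratio]
  · exact mean_const ((E.refLaw π).sum_prob l) 1

lemma mean_lrFactor_mul_lrFactor (l : List (O × A)) :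
    mean ((E.refLaw π).prob l) (fun p => E.lrFactor L μ l p * E.lrFactor L μ' l p) =
      1 + (if l.length + 1 = H then 1 else E.σ ^ 2 * corr μ μ') * E.atPlus L l := by
  simp only [lrFactor, atPlus]
  by_cases h : E.path L true l = E.plus
  · simp only [if_pos h, mul_one]
    rw [E.mean_refLaw_of_path_eq_plus hL π h fun o =>
      E.ratio μ (l.length + 1) o * E.ratio μ' (l.length + 1) o, mean_base_ratio_mul_ratio]
  · simp only [if_neg h, mul_one, mul_zero, add_zero]
    exact mean_const ((E.refLaw π).sum_prob l) 1

lemma mean_lr (k : ℕ) :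
    mean ((E.refLaw π).pathProb k) (fun τ => E.lr L μ (List.ofFn τ)) = 1 := by
  rw [SeqLaw.mean_pathProb_eq, lr_nil]
  intro l _
  simp only [lr_append_singleton, mean_const_mul, E.mean_lrFactor hL, mul_one]

lemma mean_lr_mul_lr_append_le {l : List (O × A)} (hl : l.length < H) :
    mean ((E.refLaw π).prob l) (fun p => E.lr L μ (l ++ [p]) * E.lr L μ' (l ++ [p])) ≤
      E.lr L μ l * E.lr L μ' l +
        3 * ((if l.length + 1 = H then 1 else E.σ ^ 2 * |corr μ μ'|) * E.atPlus L l) := by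
  have weight_le : (if l.length + 1 = H then 1 else E.σ ^ 2 * corr μ μ') ≤
      if l.length + 1 = H then 1 else E.σ ^ 2 * |corr μ μ'| := by
    split_ifs
    · exact le_rfl
    · exact mul_le_mul_of_nonneg_left (le_abs_self _) (sq_nonneg _)
  have weight_nonneg : 0 ≤ if l.length + 1 = H then 1 else E.σ ^ 2 * |corr μ μ'| := by
    split_ifs <;> positivity
  simp only [lr_append_singleton, mul_mul_mul_comm _ (E.lrFactor L μ l _), mean_const_mul,
    E.mean_lrFactor_mul_lrFactor hL]
  have excess_le := mul_le_mul_of_nonneg_right weight_le (E.atPlus_nonneg L l)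
  have excess_nonneg := mul_nonneg weight_nonneg (E.atPlus_nonneg L l)
  nlinarith [E.lr_mul_lr_le L μ μ' (l := l) (by omega), E.lr_nonneg L μ l, E.lr_nonneg L μ' l,
    mul_le_mul_of_nonneg_left excess_le (mul_nonneg (E.lr_nonneg L μ l) (E.lr_nonneg L μ' l))]

/-- The mixed second moment exceeds `1` only through the time spent at `plus`: before the last step
proportionally to the correlation of the hidden signs. -/
lemma mean_lr_mul_lr_le_sum {k : ℕ} (hk : k ≤ H) :
    mean ((E.refLaw π).pathProb k) (fun τ => E.lr L μ (List.ofFn τ) * E.lr L μ' (List.ofFn τ)) ≤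
      1 + 3 * ∑ h ∈ Finset.range k,
        (if h + 1 = H then 1 else E.σ ^ 2 * |corr μ μ'|) * E.plusProb L π h := by
  induction k with
  | zero =>
    rw [(E.refLaw π).mean_pathProb_zero fun l => E.lr L μ l * E.lr L μ' l]
    simp
  | succ k ih =>
    rw [(E.refLaw π).mean_pathProb_succ k fun l => E.lr L μ l * E.lr L μ' l,
      Finset.sum_range_succ, mul_add, ← add_assoc]
    refine (mean_mono (SeqLaw.pathProb_nonneg _) fun τ =>
      E.mean_lr_mul_lr_append_le hL μ μ' π (by simpa using hk)).trans ?_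
    simp only [List.length_ofFn]
    rw [mean_add, mean_const_mul, mean_const_mul]
    exact add_le_add (ih (by omega)) le_rfl

lemma mean_lr_mul_lr_le :
    mean ((E.refLaw π).pathProb H) (fun τ => E.lr L μ (List.ofFn τ) * E.lr L μ' (List.ofFn τ)) ≤
      1 + 3 * (E.σ ^ 2 * |corr μ μ'| * E.earlyTime L π + E.finalProb L π) := by
  refine (E.mean_lr_mul_lr_le_sum hL μ μ' π le_rfl).trans ?_
  gcongr
  cases H with
  | zero => simpa [earlyTime] using E.finalProb_nonneg L π
  | succ N =>
    rw [Finset.sum_range_succ, if_pos rfl, one_mul, earlyTime, finalProb, Nat.add_sub_cancel,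
      Finset.mul_sum]
    refine (add_le_add_left (Finset.sum_congr rfl fun h hh => ?_).le _)
    rw [if_neg (by simpa using (Finset.mem_range.mp hh).ne)]

lemma mean_episodeLR (k : ℕ) :
    mean ((E.refLaw π).pathProb k) (fun τ => E.episodeLR L μ (List.ofFn τ)) = 1 := by
  simp only [episodeLR]
  rw [mean_add, mean_const (SeqLaw.sum_pathProb _ k), mean_const_mul, E.mean_lr hL]
  ring

lemma mean_episodeLR_mul_episodeLR_le :
    mean ((E.refLaw π).pathProb H)
        (fun τ => E.episodeLR L μ (List.ofFn τ) * E.episodeLR L μ' (List.ofFn τ)) ≤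
      1 + 3 * E.ε ^ 2 * (E.σ ^ 2 * |corr μ μ'| * E.earlyTime L π + E.finalProb L π) := by
  have expand : ∀ l : List (O × A), E.episodeLR L μ l * E.episodeLR L μ' l =
      (1 - E.ε) ^ 2 + E.ε * (1 - E.ε) * E.lr L μ l + E.ε * (1 - E.ε) * E.lr L μ' l +
        E.ε ^ 2 * (E.lr L μ l * E.lr L μ' l) := fun l => by unfold episodeLR; ring
  simp only [expand]
  rw [mean_add, mean_add, mean_add, mean_const (SeqLaw.sum_pathProb _ H), mean_const_mul,
    mean_const_mul, mean_const_mul, E.mean_lr hL, E.mean_lr hL]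
  linarith [mul_le_mul_of_nonneg_left (E.mean_lr_mul_lr_le hL μ μ' π) (sq_nonneg E.ε)]

end LockEnv

/-! ### Values of policies -/

/-- The state reached from the root by the open-loop plan `plan`, whose `i`-th action is
`plan i` for `i = 1, 2, …`. -/
def LockGraph.walk {S A : Type} (G : LockGraph S A) (plan : ℕ → A) : ℕ → S
  | 0 => G.root
  | i + 1 => G.move (G.walk plan i) (plan (i + 1))

lemma LockGraph.walk_ne_plus {S A : Type} (G : LockGraph S A) (plan : ℕ → A) (i : ℕ) :
    G.walk plan i ≠ G.plus := by
  cases i with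
  | zero => exact G.root_ne_plus
  | succ i => exact G.move_ne_plus _ _

/-- The plan that opens the lock: it follows `plan` to the leaf, makes the secret move, and then
plays the password. -/
def Lock.solve {S A : Type} (L : Lock S A) (plan : ℕ → A) (h : ℕ) : A :=
  if h < L.time then plan h else if h = L.time then L.action else L.password h

namespace Lock

variable {S A : Type} (L : Lock S A) (plan : ℕ → A)

lemma solve_of_lt {h : ℕ} (hh : h < L.time) : L.solve plan h = plan h := if_pos hh

lemma solve_time : L.solve plan L.time = L.action := by
  rw [solve, if_neg (lt_irrefl _), if_pos rfl]

lemma solve_of_gt {h : ℕ} (hh : L.time < h) : L.solve plan h = L.password h := by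
  rw [solve, if_neg hh.not_gt, if_neg hh.ne']

end Lock

/-- The open-loop policy playing a plan. -/
def planPolicy {O A : Type} [Fintype A] [DecidableEq A] (plan : ℕ → A) : Policy O A where
  act l _ a := if a = plan (l.length + 1) then 1 else 0
  act_nonneg _ _ _ := by split_ifs <;> norm_num
  act_sum _ _ := by simp

namespace LockEnv

variable {S O A : Type} {K H : ℕ} (E : LockEnv S O A K H) [DecidableEq S] [DecidableEq O]
  [Fintype O] [Fintype A] [DecidableEq A]
  {L : Lock S A} (hL : E.exits L.leaf L.action) (μ : Fin K → Bool) (π : Policy O A)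

/-- Without a secret exit, the probability of a rewarding symbol after a history. -/
def goodProb (l : List (O × A)) : ℝ := mean (E.refEmit (E.ref l)) E.good

lemma mean_lrFactor_mul_good {l : List (O × A)} (hl : l.length + 1 = H)
    (hL : E.exits L.leaf L.action) :
    mean ((E.refLaw π).prob l) (fun p => E.lrFactor L μ l p * E.good p.1) =
      E.goodProb l + E.atPlus L l / 2 := by
  unfold lrFactor atPlus goodProb
  split_ifs with h
  · rw [E.mean_refLaw_of_path_eq_plus hL π h fun o => E.ratio μ (l.length + 1) o * E.good o, hl,
      E.ref_eq_minus_of_path_eq_plus hL h, refEmit_minus, mean_base_good]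
    simp only [mul_comm _ (E.good _), mean_base_good_mul_ratio]
    norm_num
  · simp only [one_mul, zero_div, add_zero]
    exact E.mean_refLaw_fst π l E.good

lemma value_model [Fintype S] (hL : E.exits L.leaf L.action) (hH : L.time < H) :
    (E.model L μ).value π = mean ((E.refLaw π).pathProb (H - 1)) fun τ =>
      E.episodeLR L μ (List.ofFn τ) * E.goodProb (List.ofFn τ) +
        E.ε / 2 * (E.lr L μ (List.ofFn τ) * E.atPlus L (List.ofFn τ)) := by
  obtain ⟨N, rfl⟩ : ∃ N, H = N + 1 := ⟨H - 1, by omega⟩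
  set lastReward : List (O × A) → ℝ := fun l => l.getLast?.elim 0 fun p => E.good p.1
  have reward_eq : ∀ τ : Fin (N + 1) → O × A,
      ∑ h : Fin (N + 1), (E.model L μ).reward (h.1 + 1) (τ h).1 (τ h).2 =
        lastReward (List.ofFn τ) := fun τ => by
    rw [Fin.sum_univ_castSucc, Finset.sum_eq_zero fun h _ => ?_]
    · simp only [lastReward, List.ofFn_succ', List.concat_eq_append, List.getLast?_concat,
        Option.elim_some]
      simp [model]
    · simp [model, h.2.ne]
  have one_step : ∀ l : List (O × A), l.length = N →
      mean ((E.refLaw π).prob l)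
          (fun p => E.episodeLR L μ (l ++ [p]) * lastReward (l ++ [p])) =
        E.episodeLR L μ l * E.goodProb l + E.ε / 2 * (E.lr L μ l * E.atPlus L l) := by
    intro l hl
    have expand : ∀ p, E.episodeLR L μ (l ++ [p]) * lastReward (l ++ [p]) =
        (1 - E.ε) * E.good p.1 + E.ε * E.lr L μ l * (E.lrFactor L μ l p * E.good p.1) :=
      fun p => by
        simp only [episodeLR, lr_append_singleton, lastReward, List.getLast?_concat,
          Option.elim_some]
        ring
    simp only [expand]
    rw [mean_add, mean_const_mul, mean_const_mul, mean_refLaw_fst,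
      E.mean_lrFactor_mul_good μ π (by omega) hL, episodeLR, ← goodProb]
    ring
  calc (E.model L μ).value π
      = mean ((E.refLaw π).pathProb (N + 1)) fun τ =>
          E.episodeLR L μ (List.ofFn τ) * lastReward (List.ofFn τ) := by
        simp only [POMDP.value, mean, reward_eq, E.trajProb_model hL μ π hH, mul_assoc]
    _ = _ := by
        rw [(E.refLaw π).mean_pathProb_succ N fun l => E.episodeLR L μ l * lastReward l]
        exact congrArg _ (funext fun τ => one_step _ (by simp))

/-- Any value gained over `1/2` is paid for by being at `plus` at the last step. -/
lemma value_model_le [Fintype S] (hL : E.exits L.leaf L.action) (hH : L.time < H) :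
    (E.model L μ).value π ≤ 1 / 2 + 7 / 8 * E.ε * E.finalProb L π := by
  have ε_pos := E.ε_pos
  rw [E.value_model μ π hL hH]
  calc mean ((E.refLaw π).pathProb (H - 1)) _
      ≤ mean ((E.refLaw π).pathProb (H - 1)) fun τ =>
          E.episodeLR L μ (List.ofFn τ) * (1 / 2) +
            7 / 8 * E.ε * E.atPlus L (List.ofFn τ) := by
        refine mean_mono (SeqLaw.pathProb_nonneg _) fun τ => add_le_add ?_ ?_
        · exact mul_le_mul_of_nonneg_left (E.mean_refEmit_good_le _) (E.episodeLR_nonneg L μ _)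
        · nlinarith [mul_nonneg (mul_nonneg ε_pos.le (E.atPlus_nonneg L (List.ofFn τ)))
            (sub_nonneg.mpr (E.lr_le L μ (l := List.ofFn τ) (by simp; omega)))]
    _ = 1 / 2 + 7 / 8 * E.ε * E.finalProb L π := by
        rw [mean_add, mean_mul_const, E.mean_episodeLR hL, mean_const_mul, one_mul]
        rfl

lemma finalProb_le_one : E.finalProb L π ≤ 1 :=
  (mean_mono (SeqLaw.pathProb_nonneg _) fun _ => E.atPlus_le_one L _).trans_eq
    (mean_const (SeqLaw.sum_pathProb _ _) 1)

lemma action_eq_of_refLaw_planPolicy_ne_zero {plan : ℕ → A} {l : List (O × A)} {p : O × A}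
    (h : (E.refLaw (planPolicy plan)).prob l p ≠ 0) : p.2 = plan (l.length + 1) := by
  by_contra hne
  exact h (by simp [refLaw, planPolicy, hne])

section Solve

variable {plan : ℕ → A} (hwalk : E.walk plan (L.time - 1) = L.leaf) (htime : 0 < L.time)
include hwalk htime

lemma path_of_solve {N : ℕ} {τ : Fin N → O × A}
    (hτ : (E.refLaw (planPolicy (L.solve plan))).pathProb N τ ≠ 0) (hN : L.time ≤ N) :
    E.path L true (List.ofFn τ) = E.plus := by
  suffices key : (N < L.time → E.path L true (List.ofFn τ) = E.walk plan N) ∧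
      (L.time ≤ N → E.path L true (List.ofFn τ) = E.plus) from key.2 hN
  have key := SeqLaw.induction_of_pathProb_ne_zero (Q := fun l : List (O × A) =>
    (l.length < L.time → E.path L true l = E.walk plan l.length) ∧
      (L.time ≤ l.length → E.path L true l = E.plus)) _ ?_ ?_ hτ
  · simpa using key
  · exact ⟨fun _ => E.path_nil L true, fun h => absurd htime (by simpa using h)⟩
  · rintro l p ⟨before, after⟩ hp
    rw [LockGraph.path_append_singleton, E.action_eq_of_refLaw_planPolicy_ne_zero hp,
      List.length_append, List.length_singleton, LockGraph.step]
    rcases lt_trichotomy (l.length + 1) L.time with h | h | h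
    · rw [before (by omega), if_neg (E.walk_ne_plus _ _), if_neg fun h' => h.ne h'.1,
        L.solve_of_lt plan h]
      exact ⟨fun _ => rfl, fun h' => absurd h' (by omega)⟩
    · have length_eq : l.length = L.time - 1 := by omega
      rw [before (by omega), if_neg (E.walk_ne_plus _ _), h, L.solve_time, length_eq, hwalk,
        if_pos ⟨rfl, rfl, rfl⟩, if_pos rfl]
      exact ⟨fun h' => absurd h' (lt_irrefl _), fun _ => rfl⟩
    · rw [after (by omega), if_pos rfl, L.solve_of_gt plan h, if_pos rfl]
      exact ⟨fun h' => absurd h' (by omega), fun _ => rfl⟩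

lemma value_model_solve [Fintype S] (hL : E.exits L.leaf L.action) (hH : L.time < H) :
    (E.model L μ).value (planPolicy (L.solve plan)) = 1 / 2 + E.ε / 2 := by
  rw [E.value_model μ _ hL hH]
  calc mean ((E.refLaw (planPolicy (L.solve plan))).pathProb (H - 1)) _
      = mean ((E.refLaw (planPolicy (L.solve plan))).pathProb (H - 1)) fun τ =>
          E.episodeLR L μ (List.ofFn τ) * (1 / 2) + E.ε / 2 * E.lr L μ (List.ofFn τ) := by
        refine mean_congr fun τ hτ => ?_
        have path_eq := E.path_of_solve hwalk htime hτ (by omega)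
        rw [goodProb, E.ref_eq_minus_of_path_eq_plus hL path_eq, refEmit_minus, mean_base_good,
          atPlus, if_pos path_eq, mul_one]
    _ = 1 / 2 + E.ε / 2 := by
        rw [mean_add, mean_mul_const, E.mean_episodeLR hL, mean_const_mul, E.mean_lr hL]
        ring

/-- A nearly optimal policy stays at `plus` until the end with substantial probability, even under
the reference law. -/
lemma one_le_finalProb_of_accurate [Fintype S] (hL : E.exits L.leaf L.action) (hH : L.time < H)
    (h : (E.model L μ).optValue - (E.model L μ).value π < E.ε / 8) :
    1 ≤ 7 / 3 * E.finalProb L π := by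
  have ε_pos := E.ε_pos
  have bddAbove : BddAbove (Set.range fun π' : Policy O A => (E.model L μ).value π') := by
    refine ⟨1 / 2 + 7 / 8 * E.ε, ?_⟩
    rintro _ ⟨π', rfl⟩
    refine (E.value_model_le μ π' hL hH).trans ?_
    nlinarith [E.finalProb_le_one (L := L) π']
  have le_opt : (E.model L μ).value (planPolicy (L.solve plan)) ≤ (E.model L μ).optValue :=
    le_ciSup bddAbove _
  rw [E.value_model_solve μ hwalk htime hL hH] at le_opt
  have gain : E.ε * (3 / 8) < E.ε * (7 / 8 * E.finalProb L π) := by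
    linarith [E.value_model_le μ π hL hH]
  linarith [lt_of_mul_lt_mul_left gain ε_pos.le]

end Solve

end LockEnv

/-! ### Arms and passwords -/

namespace LockGraph

variable {S O A : Type} (G : LockGraph S A)

open Classical in
/-- The arm pulled by a history: the step, state and action by which it leaves the tree, if it
does. -/
def pull (l : List (O × A)) : Option (ℕ × S × A) :=
  prefixFold none (fun l c p =>
    if G.exits (G.ref l) p.2 then some (l.length + 1, G.ref l, p.2) else c) l

@[simp]
lemma pull_nil : G.pull ([] : List (O × A)) = none := prefixFold_nil _ _

open Classical in
lemma pull_append_singleton (l : List (O × A)) (p : O × A) :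
    G.pull (l ++ [p]) =
      if G.exits (G.ref l) p.2 then some (l.length + 1, G.ref l, p.2) else G.pull l :=
  prefixFold_append_singleton _ _ _ _

lemma ref_of_pull_eq_some {l : List (O × A)} {x : ℕ × S × A} (h : G.pull l = some x) :
    G.ref l = G.minus := by
  induction l using List.reverseRecOn with
  | nil => simp at h
  | append_singleton l p ih =>
    rw [pull_append_singleton] at h
    rw [ref_append_singleton]
    split_ifs at h with exit
    · exact G.move_exits _ _ exit
    · rw [ih h, G.move_minus]

lemma pull_append_of_pull_eq_some {l : List (O × A)} {x : ℕ × S × A} (h : G.pull l = some x)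
    (p : O × A) : G.pull (l ++ [p]) = some x := by
  rw [pull_append_singleton, G.ref_of_pull_eq_some h, if_neg (G.not_exits_minus _), h]

variable [DecidableEq S] [DecidableEq A] {L : Lock S A}

lemma step_true_eq_plus_iff {h : ℕ} {s : S} {a : A} :
    G.step L true h s a = G.plus ↔ (s = G.plus ∧ a = L.password h) ∨
      (s ≠ G.plus ∧ h = L.time ∧ s = L.leaf ∧ a = L.action) := by
  unfold step
  split_ifs with hs ha hexit <;>
    simp_all [G.plus_ne_minus.symm, G.move_ne_plus]

lemma pull_of_path_eq_plus (hL : G.exits L.leaf L.action) {l : List (O × A)}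
    (h : G.path L true l = G.plus) : G.pull l = some (L.time, L.leaf, L.action) := by
  induction l using List.reverseRecOn with
  | nil => exact absurd ((G.path_nil L true).symm.trans h) G.root_ne_plus
  | append_singleton l p ih =>
    rw [path_append_singleton, step_true_eq_plus_iff] at h
    rcases h with ⟨plus, -⟩ | ⟨not_plus, time, leaf, action⟩
    · exact G.pull_append_of_pull_eq_some (ih plus) p
    · rw [G.path_true_eq_ref hL not_plus] at leaf
      rw [pull_append_singleton, leaf, action, time, if_pos hL]

lemma time_le_length_of_path_eq_plus {l : List (O × A)} (h : G.path L true l = G.plus) :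
    L.time ≤ l.length := by
  induction l using List.reverseRecOn with
  | nil => exact absurd ((G.path_nil L true).symm.trans h) G.root_ne_plus
  | append_singleton l p ih =>
    rw [path_append_singleton, step_true_eq_plus_iff] at h
    rw [List.length_append, List.length_singleton]
    rcases h with ⟨plus, -⟩ | ⟨-, time, -⟩
    · exact (ih plus).trans (Nat.le_succ _)
    · exact time.ge

lemma action_eq_password_of_path_eq_plus {l : List (O × A)} (h : G.path L true l = G.plus)
    {i : ℕ} (hi : i < l.length) (htime : L.time ≤ i) : l[i].2 = L.password (i + 1) := by
  induction l using List.reverseRecOn with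
  | nil => simp at hi
  | append_singleton l p ih =>
    rw [path_append_singleton, step_true_eq_plus_iff] at h
    rw [List.length_append, List.length_singleton] at hi
    rcases h with ⟨plus, action⟩ | ⟨-, time, -⟩
    · rcases (Nat.lt_succ_iff.mp hi).lt_or_eq with hlt | rfl
      · rw [List.getElem_append_left hlt]
        exact ih plus hlt
      · rw [List.getElem_concat_length rfl]
        exact action
    · omega

end LockGraph

/-- The lock with arm `x` and password `pw`; the letters beyond step `H` are irrelevant. -/
def Lock.ofArm {S A : Type} {H : ℕ} (x : ℕ × S × A) (pw : Fin H → A) : Lock S A :=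
  ⟨x.1, x.2.1, x.2.2, fun h => if hh : h < H then pw ⟨h, hh⟩ else x.2.2⟩

lemma card_filter_forall_mem_eq_mul_pow {ι α : Type*} [Fintype ι] [DecidableEq ι] [Fintype α]
    [DecidableEq α] (s : Finset ι) (v : ι → α) :
    #{f : ι → α | ∀ i ∈ s, f i = v i} * Fintype.card α ^ #s =
      Fintype.card α ^ Fintype.card ι := by
  have eq_piFinset : ({f : ι → α | ∀ i ∈ s, f i = v i} : Finset (ι → α)) =
      Fintype.piFinset fun i => if i ∈ s then {v i} else Finset.univ := by
    ext f
    simp only [Finset.mem_filter_univ, Fintype.mem_piFinset]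
    refine forall_congr' fun i => ?_
    split_ifs with hi <;> simp [hi]
  rw [eq_piFinset, Fintype.card_piFinset, ← Finset.card_add_card_compl s, pow_add, mul_comm]
  congr 1
  simp [apply_ite Finset.card, Finset.prod_ite, Finset.filter_not, Finset.compl_eq_univ_sdiff]

lemma sum_geometric_tail_le {r : ℝ} (hr : 0 ≤ r) (hr' : r ≤ 1 / 3) (a N : ℕ) :
    ∑ h ∈ Finset.range N, (if a ≤ h then r ^ (h - a) else 0) ≤ 3 / 2 := by
  have reindex : ∑ h ∈ Finset.range N, (if a ≤ h then r ^ (h - a) else 0) =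
      ∑ i ∈ Finset.Ico 0 (N - a), r ^ i := by
    rw [← Finset.sum_filter, show (Finset.range N).filter (a ≤ ·) = Finset.Ico a N by grind,
      Finset.sum_Ico_eq_sum_range, Nat.Ico_zero_eq_range]
    simp only [Nat.add_sub_cancel_left]
  rw [reindex]
  refine (geom_sum_Ico_le_of_lt_one hr (by linarith)).trans ?_
  rw [pow_zero, div_le_iff₀ (by linarith)]
  linarith

namespace LockEnv

variable {S O A : Type} {K H : ℕ} (E : LockEnv S O A K H) [DecidableEq S] [Fintype A]
  [DecidableEq A]

/-- The exponent `l.length - x.1` is the number of password letters played since the pull. -/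
lemma sum_atPlus_ofArm_le {x : ℕ × S × A} (hx : E.exits x.2.1 x.2.2) {l : List (O × A)}
    (hl : l.length < H) :
    ∑ pw : Fin H → A, E.atPlus (Lock.ofArm x pw) l ≤
      (Fintype.card A : ℝ) ^ H *
        (if x.1 ≤ l.length then ((Fintype.card A : ℝ)⁻¹) ^ (l.length - x.1) else 0) *
        (if E.pull l = some x then 1 else 0) := by
  by_cases hc : E.pull l = some x ∧ x.1 ≤ l.length
  · obtain ⟨pulled, time_le⟩ := hc
    set letters : Finset (Fin H) := Finset.Ioc ⟨x.1, time_le.trans_lt hl⟩ ⟨l.length, hl⟩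
    set played : Fin H → A := fun i => (l[i.1 - 1]?.map Prod.snd).getD x.2.2
    have plus_subset : ({pw : Fin H → A | E.path (Lock.ofArm x pw) true l = E.plus} : Finset _) ⊆
        ({pw : Fin H → A | ∀ i ∈ letters, pw i = played i} : Finset _) := fun pw hpw => by
      rw [Finset.mem_filter_univ] at hpw ⊢
      intro i hi
      obtain ⟨(lower : x.1 < i.1), (upper : i.1 ≤ l.length)⟩ := Finset.mem_Ioc.mp hi
      have action_eq := E.action_eq_password_of_path_eq_plus hpw (i := i.1 - 1) (by omega)
        (Nat.le_sub_one_of_lt lower)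
      rw [Nat.sub_add_cancel (by omega)] at action_eq
      simp [played, List.getElem?_eq_getElem (show i.1 - 1 < l.length by omega), action_eq,
        Lock.ofArm]
    have count : #{pw : Fin H → A | ∀ i ∈ letters, pw i = played i} *
        Fintype.card A ^ (l.length - x.1) = Fintype.card A ^ H := by
      have := card_filter_forall_mem_eq_mul_pow letters played
      rw [Fin.card_Ioc, Fintype.card_fin] at this
      convert this
    have card_pos : (0 : ℝ) < Fintype.card A := by
      exact_mod_cast Fintype.card_pos_iff.mpr ⟨x.2.2⟩
    rw [if_pos pulled, if_pos time_le, mul_one, inv_pow, ← div_eq_mul_inv,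
      le_div_iff₀ (by positivity)]
    simp only [atPlus, Finset.sum_boole]
    exact_mod_cast (Nat.mul_le_mul_right _ (Finset.card_le_card plus_subset)).trans_eq count
  · refine (Finset.sum_eq_zero fun pw _ => if_neg fun h => hc ?_).trans_le (by positivity)
    exact ⟨E.pull_of_path_eq_plus hx h, E.time_le_length_of_path_eq_plus h⟩

variable [DecidableEq O] [Fintype O] (π : Policy O A)

/-- The probability that the arm `x` is pulled during the first `h` steps. -/
def pullProb (h : ℕ) (x : ℕ × S × A) : ℝ :=
  mean ((E.refLaw π).pathProb h) fun τ => if E.pull (List.ofFn τ) = some x then 1 else 0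

lemma pullProb_nonneg (h : ℕ) (x : ℕ × S × A) : 0 ≤ E.pullProb π h x :=
  mean_nonneg (SeqLaw.pathProb_nonneg _) fun _ => by positivity

lemma monotone_pullProb (x : ℕ × S × A) : Monotone fun h => E.pullProb π h x := by
  refine monotone_nat_of_le_succ fun h => ?_
  unfold pullProb
  rw [(E.refLaw π).mean_pathProb_succ h fun l => if E.pull l = some x then 1 else 0]
  refine mean_mono (SeqLaw.pathProb_nonneg _) fun τ => ?_
  split_ifs with hτ
  · simp only [E.pull_append_of_pull_eq_some hτ, if_true]
    exact (mean_const ((E.refLaw π).sum_prob _) 1).ge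
  · exact mean_nonneg ((E.refLaw π).prob_nonneg _) fun _ => by positivity

lemma sum_pullProb_le_one {ι : Type*} [Fintype ι] {arm : ι → ℕ × S × A}
    (harm : Function.Injective arm) (h : ℕ) : ∑ i, E.pullProb π h (arm i) ≤ 1 := by
  have at_most_one : ∀ y : Option (ℕ × S × A),
      ∑ i, (if y = some (arm i) then (1 : ℝ) else 0) ≤ 1 := fun y => by
    rw [Finset.sum_boole]
    refine mod_cast Finset.card_le_one.mpr fun i hi j hj => harm ?_
    rw [Finset.mem_filter_univ] at hi hj
    exact Option.some.inj (hi.symm.trans hj)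
  unfold pullProb
  rw [← mean_sum]
  exact (mean_mono (SeqLaw.pathProb_nonneg _) fun τ => at_most_one _).trans_eq
    (mean_const (SeqLaw.sum_pathProb _ h) 1)

lemma sum_plusProb_ofArm_le {x : ℕ × S × A} (hx : E.exits x.2.1 x.2.2) {h : ℕ} (hh : h < H) :
    ∑ pw : Fin H → A, E.plusProb (Lock.ofArm x pw) π h ≤
      (Fintype.card A : ℝ) ^ H *
        (if x.1 ≤ h then ((Fintype.card A : ℝ)⁻¹) ^ (h - x.1) else 0) *
        E.pullProb π (H - 1) x := by
  unfold plusProb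
  rw [← mean_sum]
  refine (mean_mono (SeqLaw.pathProb_nonneg _) fun τ =>
    E.sum_atPlus_ofArm_le hx (by simpa using hh)).trans ?_
  simp only [List.length_ofFn]
  rw [mean_const_mul]
  exact mul_le_mul_of_nonneg_left (E.monotone_pullProb π x (Nat.le_sub_one_of_lt hh))
    (by positivity)

section SumOverArms

variable {ι : Type*} [Fintype ι] {arm : ι → ℕ × S × A} (harm : Function.Injective arm)
  (hexit : ∀ i, E.exits (arm i).2.1 (arm i).2.2)
include harm hexit

lemma sum_earlyTime_le (hA : 3 ≤ Fintype.card A) :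
    ∑ i, ∑ pw : Fin H → A, E.earlyTime (Lock.ofArm (arm i) pw) π ≤
      3 / 2 * (Fintype.card A : ℝ) ^ H := by
  have inv_card_le : (Fintype.card A : ℝ)⁻¹ ≤ 1 / 3 := by
    rw [inv_eq_one_div]
    exact one_div_le_one_div_of_le (by norm_num) (by exact_mod_cast hA)
  have one_arm : ∀ i, ∑ pw : Fin H → A, E.earlyTime (Lock.ofArm (arm i) pw) π ≤
      3 / 2 * (Fintype.card A : ℝ) ^ H * E.pullProb π (H - 1) (arm i) := fun i => by
    unfold earlyTime
    rw [Finset.sum_comm]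
    refine (Finset.sum_le_sum fun h hh => E.sum_plusProb_ofArm_le π (hexit i)
      (by rw [Finset.mem_range] at hh; omega)).trans ?_
    rw [← Finset.sum_mul, ← Finset.mul_sum, mul_comm (3 / 2 : ℝ)]
    gcongr
    · exact E.pullProb_nonneg π _ _
    · exact sum_geometric_tail_le (by positivity) inv_card_le _ _
  refine (Finset.sum_le_sum fun i _ => one_arm i).trans ?_
  rw [← Finset.mul_sum]
  exact mul_le_of_le_one_right (by positivity) (E.sum_pullProb_le_one π harm _)

lemma sum_finalProb_le (hH : 0 < H) {b : ℕ} (hb : ∀ i, (arm i).1 ≤ b) :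
    ∑ i, ∑ pw : Fin H → A, E.finalProb (Lock.ofArm (arm i) pw) π ≤
      (Fintype.card A : ℝ) ^ H * ((Fintype.card A : ℝ)⁻¹) ^ (H - 1 - b) := by
  have weight_le : ∀ i,
      (if (arm i).1 ≤ H - 1 then ((Fintype.card A : ℝ)⁻¹) ^ (H - 1 - (arm i).1) else 0) ≤
        ((Fintype.card A : ℝ)⁻¹) ^ (H - 1 - b) := fun i => by
    split_ifs
    · exact pow_le_pow_of_le_one (by positivity) (Nat.cast_inv_le_one _)
        (Nat.sub_le_sub_left (hb i) _)
    · positivity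
  have one_arm : ∀ i, ∑ pw : Fin H → A, E.finalProb (Lock.ofArm (arm i) pw) π ≤
      (Fintype.card A : ℝ) ^ H * ((Fintype.card A : ℝ)⁻¹) ^ (H - 1 - b) *
        E.pullProb π (H - 1) (arm i) := fun i => by
    refine (E.sum_plusProb_ofArm_le π (hexit i) (Nat.sub_one_lt hH.ne')).trans ?_
    gcongr
    · exact E.pullProb_nonneg π _ _
    · exact weight_le i
  refine (Finset.sum_le_sum fun i _ => one_arm i).trans ?_
  rw [← Finset.mul_sum]
  exact mul_le_of_le_one_right (by positivity) (E.sum_pullProb_le_one π harm _)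

end SumOverArms

end LockEnv

/-! ### Random signs -/

section RandomSigns

open Real

variable {K : ℕ}

lemma sum_exp_mul_corr_le (μ : Fin K → Bool) (c : ℝ) :
    ∑ μ', exp (c * corr μ μ') ≤ 2 ^ K * exp (c ^ 2 / (2 * K)) := by
  have exp_eq_prod : ∀ μ', exp (c * corr μ μ') = ∏ i, exp (c / K * (sgn (μ i) * sgn (μ' i))) :=
    fun μ' => by
      rw [← exp_sum, ← Finset.mul_sum, corr]
      ring_nf
  have sum_bool : ∀ i, ∑ b, exp (c / K * (sgn (μ i) * sgn b)) = 2 * cosh (c / K) := fun i => by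
    rw [Fintype.sum_bool, cosh_eq]
    cases μ i <;> simp only [sgn_true, sgn_false] <;> ring_nf
  calc ∑ μ', exp (c * corr μ μ') = ∏ i, ∑ b, exp (c / K * (sgn (μ i) * sgn b)) := by
        simp only [exp_eq_prod, Fintype.prod_sum]
    _ = 2 ^ K * cosh (c / K) ^ K := by
        simp only [sum_bool, Finset.prod_const, Finset.card_univ, Fintype.card_fin, mul_pow]
    _ ≤ 2 ^ K * exp ((c / K) ^ 2 / 2) ^ K := by
        gcongr
        exact cosh_le_exp_half_sq _
    _ = 2 ^ K * exp (c ^ 2 / (2 * K)) := by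
        rw [← exp_nat_mul]
        field_simp

lemma sum_cosh_mul_corr_le (μ : Fin K → Bool) (c : ℝ) :
    ∑ μ', cosh (c * corr μ μ') ≤ 2 ^ K * exp (c ^ 2 / (2 * K)) := by
  have plus := sum_exp_mul_corr_le μ c
  have minus := sum_exp_mul_corr_le μ (-c)
  simp only [neg_sq, neg_mul] at minus
  simp only [cosh_eq, ← Finset.sum_div, Finset.sum_add_distrib]
  linarith

lemma one_add_sq_div_two_le_cosh (x : ℝ) : 1 + x ^ 2 / 2 ≤ cosh x := by
  have half_le : |x| / 2 ≤ sinh (|x| / 2) := self_le_sinh_iff.mpr (by positivity)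
  calc 1 + x ^ 2 / 2 = 1 + 2 * (|x| / 2) ^ 2 := by rw [div_pow, sq_abs]; ring
    _ ≤ 1 + 2 * sinh (|x| / 2) ^ 2 := by gcongr
    _ = cosh (2 * (|x| / 2)) := by rw [cosh_two_mul, cosh_sq]; ring
    _ = cosh x := by rw [mul_div_cancel₀ _ two_ne_zero, cosh_abs]

/-- Unlike `exp |x| ≤ 2 * cosh x`, this is close to equality for small `x`. -/
lemma exp_abs_le {s : ℝ} (hs : 0 < s) (x : ℝ) :
    exp |x| ≤ 1 + s / 2 + (2 + 1 / s) * (cosh x - 1) := by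
  have exp_abs : exp |x| = 2 * cosh x - exp (-|x|) := by
    rw [← cosh_abs, cosh_eq]
    ring
  have abs_le : |x| ≤ 1 / s * (x ^ 2 / 2) + s / 2 := by
    have amgm := two_mul_le_add_sq |x| s
    rw [sq_abs] at amgm
    field_simp
    linarith
  have sq_le : 1 / s * (x ^ 2 / 2) ≤ 1 / s * (cosh x - 1) := by
    have := one_add_sq_div_two_le_cosh x
    gcongr
    linarith
  linarith [add_one_le_exp (-|x|)]

lemma sum_exp_abs_mul_corr_le (μ : Fin K → Bool) (c : ℝ) {s : ℝ} (hs : 0 < s) :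
    ∑ μ', exp |c * corr μ μ'| ≤
      2 ^ K * (1 + s / 2 + (2 + 1 / s) * (exp (c ^ 2 / (2 * K)) - 1)) := by
  calc ∑ μ', exp |c * corr μ μ'|
      ≤ ∑ μ' : Fin K → Bool, (1 + s / 2 + (2 + 1 / s) * (cosh (c * corr μ μ') - 1)) :=
        Finset.sum_le_sum fun μ' _ => exp_abs_le hs _
    _ = 2 ^ K * (1 + s / 2) + (2 + 1 / s) * (∑ μ', cosh (c * corr μ μ') - 2 ^ K) := by
        simp [Finset.sum_add_distrib, ← Finset.mul_sum, Finset.sum_sub_distrib, mul_add]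
    _ ≤ 2 ^ K * (1 + s / 2) + (2 + 1 / s) * (2 ^ K * exp (c ^ 2 / (2 * K)) - 2 ^ K) := by
        gcongr
        exact sum_cosh_mul_corr_le μ c
    _ = 2 ^ K * (1 + s / 2 + (2 + 1 / s) * (exp (c ^ 2 / (2 * K)) - 1)) := by ring

lemma sum_sum_exp_abs_corr_le (hK : 0 < K) :
    ∑ μ : Fin K → Bool, ∑ μ', exp (3 / 100 * √K * |corr μ μ'| + 3 / 100) ≤
      (1 + 0.064) * (Fintype.card (Fin K → Bool) : ℝ) ^ 2 := by
  have variance : (3 / 100 * √K) ^ 2 / (2 * K) = 9 / 20000 := by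
    have : (0 : ℝ) < K := by exact_mod_cast hK
    rw [mul_pow, sq_sqrt this.le]
    field_simp
    norm_num
  have exp_variance : exp (9 / 20000) ≤ 1 + 0.000451 := by
    have := (abs_le.mp (abs_exp_sub_one_sub_id_le (x := 9 / 20000) (by norm_num [abs_of_pos]))).2
    linarith
  have exp_shift : exp (3 / 100) ≤ 1 + 0.0309 := by
    have := (abs_le.mp (abs_exp_sub_one_sub_id_le (x := 3 / 100) (by norm_num [abs_of_pos]))).2
    linarith
  have row_le (μ : Fin K → Bool) :
      ∑ μ', exp (3 / 100 * √K * |corr μ μ'| + 3 / 100) ≤ (1 + 0.064) * 2 ^ K := by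
    have row := sum_exp_abs_mul_corr_le μ (3 / 100 * √K) (s := 3 / 100) (by norm_num)
    rw [variance] at row
    have abs_mul_corr : ∀ μ', |3 / 100 * √K * corr μ μ'| = 3 / 100 * √K * |corr μ μ'| :=
      fun μ' => by rw [abs_mul, abs_of_nonneg (by positivity)]
    simp only [abs_mul_corr] at row
    simp only [exp_add, ← Finset.sum_mul]
    calc _ ≤ 2 ^ K * (1 + 0.031) * (1 + 0.0309 : ℝ) := by
          gcongr
          refine row.trans (mul_le_mul_of_nonneg_left ?_ (by positivity))
          linarith
      _ ≤ (1 + 0.064) * 2 ^ K := by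
          rw [mul_assoc, mul_comm]
          gcongr
          norm_num1
  calc _ ≤ ∑ _μ : Fin K → Bool, (1 + 0.064) * (2 : ℝ) ^ K := Finset.sum_le_sum fun μ _ => row_le μ
    _ = (1 + 0.064) * (Fintype.card (Fin K → Bool) : ℝ) ^ 2 := by
        simp
        ring

end RandomSigns

/-! ### The information cost of learning the secret -/

lemma sum_total_le {X κ : Type*} [Fintype κ] {u : κ → List X → ℝ} {c : ℝ}
    (hu : ∀ l, ∑ k, u k l ≤ c) (l : List X) : ∑ k, total (u k) l ≤ l.length * c := by
  induction l using List.reverseRecOn with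
  | nil => simp [total]
  | append_singleton l x ih =>
    simp only [total_append_singleton, Finset.sum_add_distrib, List.length_append,
      List.length_singleton, Nat.cast_add, Nat.cast_one]
    linarith [hu l]

namespace LockEnv

variable {S O A : Type} {K H : ℕ} (E : LockEnv S O A K H) [Fintype A]

/-- An upper bound for the average over the passwords of the information that one episode yields
about all arms together, when the arms are pulled by step `b`. -/
def infoBound (b : ℕ) : ℝ :=
  100 * E.ε ^ 2 * (3 / 2 * E.σ ^ 2 / √K + (Fintype.card A : ℝ)⁻¹ ^ (H - 1 - b))

variable [DecidableEq S] [DecidableEq O] [Fintype O]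

/-- The law of the transcript of an algorithm under the reference model, one episode being one
symbol. -/
def transcriptLaw (𝔄 : Algorithm O A H) : SeqLaw (Fin H → O × A) where
  prob past := (E.refLaw (𝔄.policyAt past)).pathProb H
  prob_nonneg _ := SeqLaw.pathProb_nonneg _
  sum_prob _ := SeqLaw.sum_pathProb _ H

variable [DecidableEq A]

/-- The information an episode played with policy `π` can yield about the secret, in units in which
the whole secret costs at least a constant. -/
def info (L : Lock S A) (π : Policy O A) : ℝ :=
  100 * E.ε ^ 2 * (E.σ ^ 2 / √K * E.earlyTime L π + E.finalProb L π)

lemma info_nonneg (L : Lock S A) (π : Policy O A) : 0 ≤ E.info L π := by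
  have early := E.earlyTime_nonneg L π
  have final := E.finalProb_nonneg L π
  unfold info
  positivity

/-- The information spent on the lock `L` in the episodes `past`, plus the quality of the final
guess. -/
def effort (L : Lock S A) (𝔄 : Algorithm O A H) (past : List (Fin H → O × A)) : ℝ :=
  7 / 3 * E.finalProb L (𝔄.out past) + total (fun past => E.info L (𝔄.policyAt past)) past

section FixedLock

variable {L : Lock S A} (hL : E.exits L.leaf L.action)
include hL

lemma mean_episodeLR_mul_episodeLR_le_exp (μ μ' : Fin K → Bool) (π : Policy O A) :
    mean ((E.refLaw π).pathProb H)
        (fun τ => E.episodeLR L μ (List.ofFn τ) * E.episodeLR L μ' (List.ofFn τ)) ≤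
      Real.exp (E.info L π * (3 / 100 * √K * |corr μ μ'| + 3 / 100)) := by
  refine (E.mean_episodeLR_mul_episodeLR_le hL μ μ' π).trans
    (le_trans ?_ (Real.add_one_le_exp _))
  have early := E.earlyTime_nonneg L π
  have final := E.finalProb_nonneg L π
  have sqrt_pos : 0 < √(K : ℝ) := Real.sqrt_pos.mpr (by exact_mod_cast E.K_pos)
  have expand : E.info L π * (3 / 100 * √K * |corr μ μ'| + 3 / 100) =
      3 * E.ε ^ 2 * (E.σ ^ 2 * |corr μ μ'| * E.earlyTime L π + E.finalProb L π) +
        3 * E.ε ^ 2 * (E.σ ^ 2 / √K * E.earlyTime L π + √K * |corr μ μ'| * E.finalProb L π) := by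
    unfold info
    field_simp
    ring
  have cross_nonneg : 0 ≤ 3 * E.ε ^ 2 *
      (E.σ ^ 2 / √K * E.earlyTime L π + √K * |corr μ μ'| * E.finalProb L π) := by positivity
  linarith

/-- The law of the transcript in the model with hidden signs `μ`. -/
def modelLaw (μ : Fin K → Bool) (𝔄 : Algorithm O A H) : SeqLaw (Fin H → O × A) :=
  (E.transcriptLaw 𝔄).tilt (fun _ τ => E.episodeLR L μ (List.ofFn τ))
    (fun _ _ => E.episodeLR_nonneg L μ _) fun _ => E.mean_episodeLR hL μ _ H

variable [Fintype S]

lemma transcriptProb_model (hH : L.time < H) (μ : Fin K → Bool) (𝔄 : Algorithm O A H) {T : ℕ}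
    (τs : Fin T → Fin H → O × A) :
    (E.model L μ).transcriptProb 𝔄 τs = (E.modelLaw hL μ 𝔄).pathProb T τs :=
  Finset.prod_congr rfl fun _ _ => E.trajProb_model hL μ _ hH _

variable {plan : ℕ → A} (hwalk : E.walk plan (L.time - 1) = L.leaf) (htime : 0 < L.time)
  (hH : L.time < H)
include hwalk htime hH

lemma pacProb_le_mean_modelLaw (μ : Fin K → Bool) (𝔄 : Algorithm O A H) (T : ℕ) :
    (E.model L μ).pacProb 𝔄 T (E.ε / 8) ≤ mean ((E.modelLaw hL μ 𝔄).pathProb T)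
      fun τs => min 1 (7 / 3 * E.finalProb L (𝔄.out (List.ofFn τs))) := by
  refine Finset.sum_le_sum fun τs _ => ?_
  rw [E.transcriptProb_model hL hH]
  beta_reduce
  split_ifs with accurate
  · rw [min_eq_left (E.one_le_finalProb_of_accurate μ _ hwalk htime hL hH accurate), mul_one]
  · have := E.finalProb_nonneg L (𝔄.out (List.ofFn τs))
    exact mul_nonneg (SeqLaw.pathProb_nonneg _ _) (by positivity)

lemma le_mean_effort {𝔄 : Algorithm O A H} {T : ℕ}
    (hpac : ∀ μ, (3 : ℝ) / 4 ≤ (E.model L μ).pacProb 𝔄 T (E.ε / 8)) :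
    0.497 ≤ mean ((E.transcriptLaw 𝔄).pathProb T) fun τs => E.effort L 𝔄 (List.ofFn τs) := by
  set guess : List (Fin H → O × A) → ℝ := fun past => min 1 (7 / 3 * E.finalProb L (𝔄.out past))
  have guess_mem : ∀ past, guess past ∈ Set.Icc 0 1 := fun past => by
    have := E.finalProb_nonneg L (𝔄.out past)
    exact ⟨by positivity, min_le_left _ _⟩
  have change_of_measure := (E.transcriptLaw 𝔄).le_mean_add_total_of_le_mean_tilt
    (fun past => E.info_nonneg L (𝔄.policyAt past))
    (fun μ _ _ => E.episodeLR_nonneg L μ _) (fun μ _ => E.mean_episodeLR hL μ _ H)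
    (fun _ _ => by positivity)
    (fun μ μ' past => E.mean_episodeLR_mul_episodeLR_le_exp hL μ μ' (𝔄.policyAt past))
    (sum_sum_exp_abs_corr_le E.K_pos) guess_mem
    fun μ => (hpac μ).trans (E.pacProb_le_mean_modelLaw hL hwalk htime hH μ 𝔄 T)
  have mean_le : mean ((E.transcriptLaw 𝔄).pathProb T) (fun τs => guess (List.ofFn τs) +
      total (fun past => E.info L (𝔄.policyAt past)) (List.ofFn τs)) ≤
      mean ((E.transcriptLaw 𝔄).pathProb T) fun τs => E.effort L 𝔄 (List.ofFn τs) :=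
    mean_mono (SeqLaw.pathProb_nonneg _) fun τs => by
      unfold effort
      gcongr
      exact min_le_right _ _
  linarith

end FixedLock

section SumOverArms

variable {ι : Type*} [Fintype ι] {arm : ι → ℕ × S × A} (harm : Function.Injective arm)
  (hexit : ∀ i, E.exits (arm i).2.1 (arm i).2.2) (hA : 3 ≤ Fintype.card A) {b : ℕ} (hH : 0 < H)
  (hb : ∀ i, (arm i).1 ≤ b)
include harm hexit hH hb

include hA in
lemma sum_info_le (π : Policy O A) :
    ∑ i, ∑ pw : Fin H → A, E.info (Lock.ofArm (arm i) pw) π ≤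
      (Fintype.card A : ℝ) ^ H * E.infoBound b := by
  calc ∑ i, ∑ pw : Fin H → A, E.info (Lock.ofArm (arm i) pw) π
      = 100 * E.ε ^ 2 *
          (E.σ ^ 2 / √K * ∑ i, ∑ pw : Fin H → A, E.earlyTime (Lock.ofArm (arm i) pw) π +
            ∑ i, ∑ pw : Fin H → A, E.finalProb (Lock.ofArm (arm i) pw) π) := by
        simp only [info, ← Finset.mul_sum, Finset.sum_add_distrib]
    _ ≤ 100 * E.ε ^ 2 * (E.σ ^ 2 / √K * (3 / 2 * (Fintype.card A : ℝ) ^ H) +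
          (Fintype.card A : ℝ) ^ H * (Fintype.card A : ℝ)⁻¹ ^ (H - 1 - b)) := by
        gcongr
        · exact E.sum_earlyTime_le π harm hexit hA
        · exact E.sum_finalProb_le π harm hexit hH hb
    _ = (Fintype.card A : ℝ) ^ H * E.infoBound b := by
        unfold infoBound
        ring

include hA in
lemma sum_effort_le (𝔄 : Algorithm O A H) (past : List (Fin H → O × A)) :
    ∑ i, ∑ pw : Fin H → A, E.effort (Lock.ofArm (arm i) pw) 𝔄 past ≤
      (Fintype.card A : ℝ) ^ H *
        (7 / 3 * (Fintype.card A : ℝ)⁻¹ ^ (H - 1 - b) + past.length * E.infoBound b) := by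
  have guess_le := E.sum_finalProb_le (𝔄.out past) harm hexit hH hb
  have total_le := sum_total_le (κ := ι × (Fin H → A))
    (u := fun p past => E.info (Lock.ofArm (arm p.1) p.2) (𝔄.policyAt past))
    (fun past => (Fintype.sum_prod_type _).trans_le
      (E.sum_info_le harm hexit hA hH hb (𝔄.policyAt past))) past
  rw [Fintype.sum_prod_type] at total_le
  simp only [effort, Finset.sum_add_distrib, ← Finset.mul_sum]
  linarith

include hA in
/-- Each episode has only a fixed total information to spread over all the secrets, and so does
the final guess. -/
lemma mul_card_arms_le [Fintype S] (hpos : ∀ i, 0 < (arm i).1) (hbH : b < H)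
    (hreach : ∀ i, ∃ plan : ℕ → A, E.walk plan ((arm i).1 - 1) = (arm i).2.1)
    {𝔄 : Algorithm O A H} {T : ℕ}
    (hpac : ∀ i (pw : Fin H → A) μ,
      (3 : ℝ) / 4 ≤ (E.model (Lock.ofArm (arm i) pw) μ).pacProb 𝔄 T (E.ε / 8)) :
    0.497 * Fintype.card ι ≤
      7 / 3 * (Fintype.card A : ℝ)⁻¹ ^ (H - 1 - b) + T * E.infoBound b := by
  have each : ∀ i, ∀ pw : Fin H → A, 0.497 ≤ mean ((E.transcriptLaw 𝔄).pathProb T)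
      fun τs => E.effort (Lock.ofArm (arm i) pw) 𝔄 (List.ofFn τs) := fun i pw => by
    obtain ⟨plan, hwalk⟩ := hreach i
    exact E.le_mean_effort (L := Lock.ofArm (arm i) pw) (hexit i) hwalk (hpos i)
      ((hb i).trans_lt hbH) (hpac i pw)
  have card_pos : (0 : ℝ) < (Fintype.card A : ℝ) ^ H := by
    have : (0 : ℝ) < Fintype.card A := by exact_mod_cast (by omega : 0 < Fintype.card A)
    positivity
  refine le_of_mul_le_mul_left ?_ card_pos
  calc (Fintype.card A : ℝ) ^ H * (0.497 * Fintype.card ι)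
      = ∑ _i : ι, ∑ _pw : Fin H → A, (0.497 : ℝ) := by
        simp only [Finset.sum_const, Finset.card_univ, nsmul_eq_mul, Fintype.card_fun,
          Fintype.card_fin, Nat.cast_pow]
        ring
    _ ≤ ∑ i, ∑ pw : Fin H → A, mean ((E.transcriptLaw 𝔄).pathProb T)
          fun τs => E.effort (Lock.ofArm (arm i) pw) 𝔄 (List.ofFn τs) :=
        Finset.sum_le_sum fun i _ => Finset.sum_le_sum fun pw _ => each i pw
    _ = mean ((E.transcriptLaw 𝔄).pathProb T) fun τs =>
          ∑ i, ∑ pw : Fin H → A, E.effort (Lock.ofArm (arm i) pw) 𝔄 (List.ofFn τs) := by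
        simp only [mean_sum]
    _ ≤ mean ((E.transcriptLaw 𝔄).pathProb T) fun _ => (Fintype.card A : ℝ) ^ H *
          (7 / 3 * (Fintype.card A : ℝ)⁻¹ ^ (H - 1 - b) + T * E.infoBound b) :=
        mean_mono (SeqLaw.pathProb_nonneg _) fun τs => by
          simpa using E.sum_effort_le harm hexit hA hH hb 𝔄 (List.ofFn τs)
    _ = _ := mean_const (SeqLaw.sum_pathProb _ T) _

end SumOverArms

end LockEnv

/-! ### The binary tree -/

/-- One step of the tree dynamics on heap indices.  Node `0` is `minus`, the tree nodes are
`1, …, 2 ^ n - 1` with root `1` and children `2 v`, `2 v + 1`, and `2 ^ n` is `plus`.  Action `0`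
waits, the other actions descend, and at a leaf they leave the tree. -/
def treeStep (n v a : ℕ) : ℕ :=
  if v = 0 then 0
  else if v < 2 ^ (n - 1) then (if a = 0 then v else if a = 1 then 2 * v else 2 * v + 1)
  else if v < 2 ^ n ∧ a = 0 then v else 0

lemma two_pow_eq_two_mul_two_pow_pred {n : ℕ} (hn : 1 ≤ n) : 2 ^ n = 2 * 2 ^ (n - 1) := by
  rw [← pow_succ', Nat.sub_add_cancel hn]

lemma treeStep_lt {n : ℕ} (hn : 1 ≤ n) (v a : ℕ) : treeStep n v a < 2 ^ n := by
  have double := two_pow_eq_two_mul_two_pow_pred hn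
  have leaves_pos : 0 < 2 ^ (n - 1) := by positivity
  unfold treeStep
  split_ifs <;> omega

/-- The dynamics on a binary tree of depth `n - 1`; the tree is left from its leaves by the nonzero
actions. -/
def treeGraph {n : ℕ} (hn : 1 ≤ n) (A : ℕ) : LockGraph (Fin (2 ^ n + 1)) (Fin A) where
  plus := ⟨2 ^ n, by omega⟩
  minus := ⟨0, Nat.succ_pos _⟩
  root := ⟨1, Nat.succ_lt_succ (by positivity)⟩
  move s a := ⟨treeStep n s a, (treeStep_lt hn _ _).trans (by omega)⟩
  exits s a := 2 ^ (n - 1) ≤ s.1 ∧ s.1 < 2 ^ n ∧ a.1 ≠ 0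
  plus_ne_minus := by simp
  root_ne_plus := by
    have := Nat.one_lt_two_pow (n := n) (by omega)
    rw [ne_eq, Fin.mk.injEq]
    omega
  move_ne_plus s a := by
    have := treeStep_lt hn s.1 a.1
    rw [ne_eq, Fin.mk.injEq]
    omega
  move_minus a := by simp [treeStep]
  move_exits s a h := by
    have : 0 < 2 ^ (n - 1) := by positivity
    simp only [Fin.mk.injEq, treeStep]
    split_ifs <;> omega
  not_exits_minus a := by simp

/-- The plan that descends to the leaf `s`, whose binary digits after the leading one say where to
turn, and then waits there. -/
def treePlan {A : ℕ} (hA : 3 ≤ A) (n s t : ℕ) : Fin A :=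
  if t ≤ n - 1 then
    if s / 2 ^ (n - 1 - t) % 2 = 0 then ⟨1, by omega⟩ else ⟨2, by omega⟩
  else ⟨0, by omega⟩

section Plan

variable {n A : ℕ} (hn : 1 ≤ n) (hA : 3 ≤ A)

lemma treeStep_treePlan {s t : ℕ} (hs : 2 ^ (n - 1) ≤ s) (hs' : s < 2 ^ n) :
    treeStep n (s / 2 ^ (n - 1 - t)) (treePlan hA n s (t + 1)) = s / 2 ^ (n - 1 - (t + 1)) := by
  unfold treeStep treePlan
  by_cases ht : t + 1 ≤ n - 1
  · set q := 2 ^ (n - 1 - (t + 1)) with hq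
    have double : 2 ^ (n - 1 - t) = q * 2 := by
      rw [hq, ← pow_succ]
      congr 1
      omega
    have double_le : q * 2 ≤ 2 ^ (n - 1) :=
      double ▸ Nat.pow_le_pow_right (by norm_num) (Nat.sub_le _ _)
    have two_le : 2 ≤ s / q := by
      rw [Nat.le_div_iff_mul_le (by positivity)]
      omega
    have parent_lt : s / q / 2 < 2 ^ (n - 1) := by
      have := two_pow_eq_two_mul_two_pow_pred (show 1 ≤ n by omega)
      have := Nat.div_le_self s q
      omega
    rw [double, ← Nat.div_div_eq_div_mul, if_neg (by omega), if_pos parent_lt, if_pos ht]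
    split_ifs <;> grind
  · have at_leaf : n - 1 - t = 0 := by omega
    have at_leaf_succ : n - 1 - (t + 1) = 0 := by omega
    have leaves_pos : 0 < 2 ^ (n - 1) := by positivity
    rw [at_leaf, at_leaf_succ, pow_zero, Nat.div_one, if_neg (by omega), if_neg (by omega),
      if_neg ht, if_pos ⟨hs', rfl⟩]

lemma walk_treePlan {s : ℕ} (hs : 2 ^ (n - 1) ≤ s) (hs' : s < 2 ^ n) (t : ℕ) :
    ((treeGraph hn A).walk (treePlan hA n s) t).1 = s / 2 ^ (n - 1 - t) := by
  induction t with
  | zero =>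
    have double := two_pow_eq_two_mul_two_pow_pred hn
    change 1 = s / 2 ^ (n - 1 - 0)
    rw [Nat.sub_zero]
    exact (Nat.div_eq_of_lt_le (by omega) (by omega)).symm
  | succ t ih =>
    change treeStep n _ _ = _
    rw [ih, treeStep_treePlan hA hs hs']

end Plan

/-- The arms of the family: a step in `[n, H / 2]`, a leaf, and a nonzero action. -/
abbrev ArmIndex (n A H : ℕ) : Type := Fin (H / 2 - n + 1) × Fin (2 ^ (n - 1)) × Fin (A - 1)

section Arms

variable {n A H : ℕ} (hn : 1 ≤ n)

/-- The step, leaf and action named by an arm index. -/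
def treeArm (i : ArmIndex n A H) : ℕ × Fin (2 ^ n + 1) × Fin A :=
  (n + i.1, ⟨2 ^ (n - 1) + i.2.1, by have := two_pow_eq_two_mul_two_pow_pred hn; omega⟩,
    ⟨i.2.2 + 1, by omega⟩)

lemma treeArm_injective : Function.Injective (treeArm hn : ArmIndex n A H → _) := by
  rintro ⟨i, j, k⟩ ⟨i', j', k'⟩ h
  simp only [treeArm, Prod.mk.injEq, Fin.mk.injEq] at h
  simp only [Prod.mk.injEq, Fin.ext_iff]
  omega

lemma exits_treeArm (i : ArmIndex n A H) :
    (treeGraph hn A).exits (treeArm hn i).2.1 (treeArm hn i).2.2 := by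
  refine ⟨Nat.le_add_right _ _, ?_, Nat.succ_ne_zero _⟩
  change 2 ^ (n - 1) + i.2.1.1 < 2 ^ n
  have := two_pow_eq_two_mul_two_pow_pred hn
  omega

lemma treeArm_time_pos (i : ArmIndex n A H) : 0 < (treeArm hn i).1 :=
  Nat.add_pos_left hn _

lemma treeArm_time_le (hH : 4 * n ≤ H) (i : ArmIndex n A H) : (treeArm hn i).1 ≤ H / 2 := by
  change n + i.1.1 ≤ H / 2
  omega

lemma exists_walk_eq_treeArm (hA : 3 ≤ A) (i : ArmIndex n A H) :
    ∃ plan, (treeGraph hn A).walk plan ((treeArm hn i).1 - 1) = (treeArm hn i).2.1 := by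
  obtain ⟨leaf_ge, leaf_lt, -⟩ := exits_treeArm hn i
  refine ⟨treePlan hA n (treeArm hn i).2.1, Fin.ext ?_⟩
  have descended : n - 1 - ((treeArm hn i).1 - 1) = 0 := by
    change n - 1 - (n + i.1.1 - 1) = 0
    omega
  rw [walk_treePlan hn hA leaf_ge leaf_lt, descended, pow_zero, Nat.div_one]

lemma le_card_armIndex (hA : 3 ≤ A) (hH : 4 * n ≤ H) :
    (2 : ℝ) ^ (n - 1) * A * H / 6 ≤ Fintype.card (ArmIndex n A H) := by
  have steps : H ≤ 4 * (H / 2 - n + 1) := by omega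
  have actions : 2 * A ≤ 3 * (A - 1) := by omega
  have product : 2 ^ (n - 1) * A * H ≤ 6 * Fintype.card (ArmIndex n A H) := by
    have := Nat.mul_le_mul (Nat.mul_le_mul steps actions) (le_refl (2 ^ (n - 1)))
    simp only [Fintype.card_prod, Fintype.card_fin]
    linarith
  rw [div_le_iff₀' (by norm_num)]
  exact_mod_cast product

include hn in
lemma card_armIndex_le (hH : 4 * n ≤ H) :
    Fintype.card (ArmIndex n A H) ≤ (2 ^ n + 1) * A * H := by
  have double := two_pow_eq_two_mul_two_pow_pred hn
  rw [Fintype.card_prod, Fintype.card_prod, Fintype.card_fin, Fintype.card_fin, Fintype.card_fin,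
    mul_comm]
  gcongr <;> omega

end Arms

lemma one_add_pow_le_three {σ : ℝ} {H : ℕ} (hσ : 0 < σ) (hσ' : σ ≤ 1 / (2 * H)) :
    (1 + σ) ^ (2 * H) ≤ 3 := by
  have exponent_le : ((2 * H : ℕ) : ℝ) * σ ≤ 1 := by
    calc ((2 * H : ℕ) : ℝ) * σ ≤ (2 * H) * (1 / (2 * H)) := by push_cast; gcongr
      _ ≤ 1 := by rw [mul_one_div]; exact div_self_le_one _
  calc (1 + σ) ^ (2 * H) ≤ Real.exp σ ^ (2 * H) := by
        gcongr
        linarith [Real.add_one_le_exp σ]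
    _ = Real.exp ((2 * H : ℕ) * σ) := by rw [← Real.exp_nat_mul]
    _ ≤ Real.exp 1 := Real.exp_le_exp.mpr exponent_le
    _ ≤ 3 := by linarith [Real.exp_one_lt_d9]

section Family

variable {ε σ : ℝ} {n K A H : ℕ} (hε : 0 < ε) (hε' : ε ≤ 1) (hσ : 0 < σ)
  (hσ' : σ ≤ 1 / (2 * H)) (hn : 1 ≤ n) (hK : 1 ≤ K) (hH : 4 * n ≤ H)

/-- The environment on the binary tree, with the observation space of the required size. -/
def treeEnv : LockEnv (Fin (2 ^ n + 1)) (Fin (2 ^ n + 2 * K + 1)) (Fin A) K H where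
  toLockGraph := treeGraph hn A
  obs := Fintype.equivOfCardEq (by simp; ring)
  σ := σ
  ε := ε
  σ_pos := hσ
  σ_le := by
    have : (1 : ℝ) ≤ 2 * H := by exact_mod_cast (by omega : 1 ≤ 2 * H)
    exact hσ'.trans (div_le_one_of_le₀ this (by positivity))
  growth := one_add_pow_le_three hσ hσ'
  ε_pos := hε
  ε_le := hε'
  K_pos := hK

/-- The hard family: one model for every arm, password and vector of hidden signs. -/
def hardFamily : Set (POMDP (Fin (2 ^ n + 1)) (Fin (2 ^ n + 2 * K + 1)) (Fin A) H) :=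
  Set.range fun p : ArmIndex n A H × (Fin H → Fin A) × (Fin K → Bool) =>
    (treeEnv hε hε' hσ hσ' hn hK hH).model (Lock.ofArm (treeArm hn p.1) p.2.1) p.2.2

lemma natCard_hardFamily_le :
    Nat.card (hardFamily hε hε' hσ hσ' hn hK hH (A := A)) ≤
      2 ^ K * A ^ H * (2 ^ n + 1) * A * H := by
  calc Nat.card (hardFamily hε hε' hσ hσ' hn hK hH (A := A))
      ≤ Nat.card (ArmIndex n A H × (Fin H → Fin A) × (Fin K → Bool)) := Finite.card_range_le _
    _ = 2 ^ K * A ^ H * Fintype.card (ArmIndex n A H) := by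
        rw [Nat.card_eq_fintype_card]
        simp only [Fintype.card_prod, Fintype.card_fun, Fintype.card_fin, Fintype.card_bool]
        ring
    _ ≤ 2 ^ K * A ^ H * ((2 ^ n + 1) * A * H) := by
        gcongr
        exact card_armIndex_le hn hH
    _ = 2 ^ K * A ^ H * (2 ^ n + 1) * A * H := by ring

lemma mul_card_armIndex_le (hA : 3 ≤ A) {T : ℕ}
    {𝔄 : Algorithm (Fin (2 ^ n + 2 * K + 1)) (Fin A) H}
    (hpac : ∀ M ∈ hardFamily hε hε' hσ hσ' hn hK hH, (3 : ℝ) / 4 ≤ M.pacProb 𝔄 T (ε / 8)) :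
    0.497 * Fintype.card (ArmIndex n A H) ≤ 7 / 3 * (A : ℝ)⁻¹ ^ (H - 1 - H / 2) +
      T * (100 * ε ^ 2 * (3 / 2 * σ ^ 2 / √K + (A : ℝ)⁻¹ ^ (H - 1 - H / 2))) := by
  have bound := (treeEnv hε hε' hσ hσ' hn hK hH).mul_card_arms_le (treeArm_injective hn)
    (exits_treeArm hn) (by rwa [Fintype.card_fin]) (by omega) (treeArm_time_le hn hH)
    (treeArm_time_pos hn) (by omega) (exists_walk_eq_treeArm hn hA)
    fun i pw μ => hpac _ ⟨(i, pw, μ), rfl⟩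
  rwa [LockEnv.infoBound, Fintype.card_fin] at bound

end Family

/-! ### Arithmetic of the lower bound -/

section Arithmetic

variable {ε σ : ℝ} {n K A H T : ℕ}

/-- The quotient `H / 2` is rounded in the first exponent and not in the second. -/
lemma inv_pow_mul_rpow_half_le (hA : 3 ≤ A) :
    (A : ℝ)⁻¹ ^ (H - 1 - H / 2) * (A : ℝ) ^ ((H : ℝ) / 2) ≤ A := by
  have A_pos : (0 : ℝ) < A := by exact_mod_cast (by omega : 0 < A)
  rw [inv_pow, ← Real.rpow_natCast, ← Real.rpow_neg A_pos.le, ← Real.rpow_add A_pos]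
  conv_rhs => rw [← Real.rpow_one (A : ℝ)]
  refine Real.rpow_le_rpow_of_exponent_le (by exact_mod_cast (by omega : 1 ≤ A)) ?_
  have : (H : ℝ) ≤ 2 * ((H - 1 - H / 2 : ℕ) : ℝ) + 2 := by
    exact_mod_cast (by omega : H ≤ 2 * (H - 1 - H / 2) + 2)
  linarith

lemma nine_le_rpow_half (hA : 3 ≤ A) (hH : 4 ≤ H) : (9 : ℝ) ≤ (A : ℝ) ^ ((H : ℝ) / 2) := by
  have A_ge : (3 : ℝ) ≤ A := by exact_mod_cast hA
  have H_ge : (4 : ℝ) ≤ H := by exact_mod_cast hH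
  calc (9 : ℝ) = 3 ^ (2 : ℝ) := by norm_num
    _ ≤ (A : ℝ) ^ (2 : ℝ) := Real.rpow_le_rpow (by norm_num) A_ge (by norm_num)
    _ ≤ _ := Real.rpow_le_rpow_of_exponent_le (by linarith) (by linarith)

/-- If `T` were smaller, neither gathering information early, nor gathering it at the last step, nor
guessing could account for all `N` arms. -/
lemma le_of_mul_card_le {N R : ℝ} (hε : 0 < ε) (hσ : 0 < σ) (hK : 1 ≤ K) (hA : 3 ≤ A) (hH : 4 ≤ H)
    (hN : (2 : ℝ) ^ (n - 1) * A * H / 6 ≤ N) (hR0 : 0 ≤ R)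
    (hR : R * (A : ℝ) ^ ((H : ℝ) / 2) ≤ A)
    (hT : 0.497 * N ≤ 7 / 3 * R + T * (100 * ε ^ 2 * (3 / 2 * σ ^ 2 / √K + R))) :
    (1 / 20000 : ℝ) *
        min ((2 : ℝ) ^ (n - 1) * √K * A * H / (σ ^ 2 * ε ^ 2))
          ((2 : ℝ) ^ (n - 1) * (A : ℝ) ^ ((H : ℝ) / 2) * H / ε ^ 2) ≤ (T : ℝ) := by
  by_contra! T_lt
  set P : ℝ := 2 ^ (n - 1)
  set Q : ℝ := (A : ℝ) ^ ((H : ℝ) / 2)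
  have P_ge : (1 : ℝ) ≤ P := one_le_pow₀ (by norm_num)
  have Q_ge : 9 ≤ Q := nine_le_rpow_half hA hH
  have H_ge : (4 : ℝ) ≤ H := by exact_mod_cast hH
  have : 0 < √(K : ℝ) := Real.sqrt_pos.mpr (by exact_mod_cast hK)
  have early_le : T * (ε ^ 2 * (σ ^ 2 / √K)) ≤ P * A * H / 20000 := by
    calc T * (ε ^ 2 * (σ ^ 2 / √K))
        ≤ 1 / 20000 * (P * √K * A * H / (σ ^ 2 * ε ^ 2)) * (ε ^ 2 * (σ ^ 2 / √K)) := by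
          gcongr
          exact T_lt.le.trans (by gcongr; exact min_le_left _ _)
      _ = P * A * H / 20000 := by field_simp
  have final_le : T * (ε ^ 2 * R) ≤ P * A * H / 20000 := by
    calc T * (ε ^ 2 * R) ≤ 1 / 20000 * (P * Q * H / ε ^ 2) * (ε ^ 2 * R) := by
          gcongr
          exact T_lt.le.trans (by gcongr; exact min_le_right _ _)
      _ = P * H / 20000 * (R * Q) := by field_simp
      _ ≤ P * H / 20000 * A := by gcongr
      _ = P * A * H / 20000 := by ring
  have guess_le : R ≤ P * A * H / 36 := by
    have nine_mul_le : R * 9 ≤ A := (mul_le_mul_of_nonneg_left Q_ge hR0).trans hR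
    have four_mul_le : 1 * A * 4 ≤ P * A * H := by gcongr
    linarith
  have : (0 : ℝ) < A := by exact_mod_cast (by omega : 0 < A)
  have arms_pos : 0 < P * A * H := by positivity
  have expand : T * (100 * ε ^ 2 * (3 / 2 * σ ^ 2 / √K + R)) =
      150 * (T * (ε ^ 2 * (σ ^ 2 / √K))) + 100 * (T * (ε ^ 2 * R)) := by ring
  linarith

end Arithmetic

end HardFamily

open HardFamily in
theorem one_step_hard_family_general (ε σ : ℝ) (n K A H : ℕ)
    (hε : 0 < ε) (hε' : ε ≤ 1) (hσ : 0 < σ) (hσ' : σ ≤ 1 / (2 * H))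
    (hn : 1 ≤ n) (hK : 1 ≤ K) (hA : 3 ≤ A) (hH : 4 * n ≤ H) :
    ∃ ℳ : Set (POMDP (Fin (2 ^ n + 1)) (Fin (2 ^ n + 2 * K + 1)) (Fin A) H),
      ℳ.Finite ∧
      (∀ M ∈ ℳ, M.IsRevealing 1 (σ / (σ + 2))) ∧
      Nat.card ℳ ≤ 2 ^ K * A ^ H * (2 ^ n + 1) * A * H ∧
      ∀ (T : ℕ) (𝔄 : Algorithm (Fin (2 ^ n + 2 * K + 1)) (Fin A) H),
        (∀ M ∈ ℳ, (3 : ℝ) / 4 ≤ M.pacProb 𝔄 T (ε / 8)) →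
        (1 / 20000 : ℝ) *
            min ((2 : ℝ) ^ (n - 1) * Real.sqrt K * A * H / (σ ^ 2 * ε ^ 2))
              ((2 : ℝ) ^ (n - 1) * (A : ℝ) ^ ((H : ℝ) / 2) * H / ε ^ 2) ≤ (T : ℝ) := by
  refine ⟨hardFamily hε hε' hσ hσ' hn hK hH, Set.finite_range _, ?_,
    natCard_hardFamily_le hε hε' hσ hσ' hn hK hH, fun T 𝔄 hpac => ?_⟩
  · rintro _ ⟨p, rfl⟩
    exact (treeEnv hε hε' hσ hσ' hn hK hH).isRevealing_model _ _
  · exact le_of_mul_card_le hε hσ hK hA (by omega) (le_card_armIndex hA hH) (by positivity)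
      (inv_pow_mul_rpow_half_le hA) (mul_card_armIndex_le hε hε' hσ hσ' hn hK hH hA hpac)

/-- **Proposition D.1 (hard instance family for single-step revealing POMDPs).**
For every `ε ∈ (0,0.1]`, `σ ∈ (0,1/(2H)]`, `n ≥ 1`, `K ≥ 1`, `A ≥ 3`, `H ≥ 4n`, there is a
finite family `ℳ` of POMDPs with `|𝒮| = 2ⁿ+1`, `|𝒪| = 2ⁿ+2K+1`, `|𝒜| = A`, each
single-step `α`-revealing with `α = σ/(σ+2)` (i.e. `1/α = 1 + 2/σ`), with
`|ℳ| ≤ 2^K·A^H·(2ⁿ+1)·A·H`, such that any `T`-episode algorithm that is `(ε/8)`-accurate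
with probability `≥ 3/4` on all of `ℳ` must satisfy
`T ≥ (1/20000)·min{ 2^{n−1}·√K·A·H/(σ²ε²), 2^{n−1}·A^{H/2}·H/ε² }`. -/
theorem one_step_hard_family (ε σ : ℝ) (n K A H : ℕ)
    (hε : 0 < ε) (hε' : ε ≤ 0.1) (hσ : 0 < σ) (hσ' : σ ≤ 1 / (2 * H))
    (hn : 1 ≤ n) (hK : 1 ≤ K) (hA : 3 ≤ A) (hH : 4 * n ≤ H) :
    ∃ ℳ : Set (POMDP (Fin (2 ^ n + 1)) (Fin (2 ^ n + 2 * K + 1)) (Fin A) H),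
      ℳ.Finite ∧
      (∀ M ∈ ℳ, M.IsRevealing 1 (σ / (σ + 2))) ∧
      Nat.card ℳ ≤ 2 ^ K * A ^ H * (2 ^ n + 1) * A * H ∧
      ∀ (T : ℕ) (𝔄 : Algorithm (Fin (2 ^ n + 2 * K + 1)) (Fin A) H),
        (∀ M ∈ ℳ, (3 : ℝ) / 4 ≤ M.pacProb 𝔄 T (ε / 8)) →
        (1 / 20000 : ℝ) *
            min ((2 : ℝ) ^ (n - 1) * Real.sqrt K * A * H / (σ ^ 2 * ε ^ 2))
              ((2 : ℝ) ^ (n - 1) * (A : ℝ) ^ ((H : ℝ) / 2) * H / ε ^ 2) ≤ (T : ℝ) :=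
  one_step_hard_family_general ε σ n K A H hε (hε'.trans (by norm_num)) hσ hσ' hn hK hA hH
end
end
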